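/- arXiv:1612.08476 — 6 statements merged into one kernel-verified Lean document; each statement's English description precedes it below -/
import Mathlib

section
/- Let I be a *-ideal (not necessarily closed) of a C*-algebra A. Then the unique C*-norm on I is the restriction to I of the norm of A; that is, if γ is a C*-norm on I then γ(a) = ‖a‖ for all a ∈ I. -/
noncomputable section

open scoped ComplexConjugate

/-- The axioms of a `*`-ternary ring (`*`-tring) structure on a complex vector
space: `μ` is linear in the odd variables, conjugate-linear in the middle one,
and satisfies the ternary associativity identities. -/
def IsTernaryProduct {E : Type*} [AddCommGroup E] [Module ℂ E]
    (μ : E → E → E → E) : Prop :=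
  (∀ x x' y z : E, μ (x + x') y z = μ x y z + μ x' y z) ∧
  (∀ (c : ℂ) (x y z : E), μ (c • x) y z = c • μ x y z) ∧
  (∀ x y y' z : E, μ x (y + y') z = μ x y z + μ x y' z) ∧
  (∀ (c : ℂ) (x y z : E), μ x (c • y) z = conj c • μ x y z) ∧
  (∀ x y z z' : E, μ x y (z + z') = μ x y z + μ x y z') ∧
  (∀ (c : ℂ) (x y z : E), μ x y (c • z) = c • μ x y z) ∧
  (∀ x y z u v : E, μ (μ x y z) u v = μ x (μ u z y) v) ∧
  (∀ x y z u v : E, μ x (μ u z y) v = μ x y (μ z u v))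

/-- A `C*`-seminorm on a `*`-tring `(E, μ)`. -/
def IsCStarSeminormTring {E : Type*} [AddCommGroup E] [Module ℂ E]
    (μ : E → E → E → E) (γ : E → ℝ) : Prop :=
  (∀ x y : E, γ (x + y) ≤ γ x + γ y) ∧
  (∀ (c : ℂ) (x : E), γ (c • x) = ‖c‖ * γ x) ∧
  (∀ x y z : E, γ (μ x y z) ≤ γ x * γ y * γ z) ∧
  (∀ x : E, γ (μ x x x) = (γ x) ^ 3)

/-- A `C*`-seminorm on a complex `*`-algebra `A`. -/
def IsCStarSeminormAlg {A : Type*} [NonUnitalRing A] [Module ℂ A] [StarRing A]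
    (α : A → ℝ) : Prop :=
  (∀ a b : A, α (a + b) ≤ α a + α b) ∧
  (∀ (c : ℂ) (a : A), α (c • a) = ‖c‖ * α a) ∧
  (∀ a b : A, α (a * b) ≤ α a * α b) ∧
  (∀ a : A, α (star a * a) = (α a) ^ 2)

/-!
Left multiplication by a self-adjoint contraction `h` is half a difference of two isometries: with
`u = √(1 - h²) - i h` one has `2 i h = u* - u`, and `γ (u x)² = γ (x* u* u x) = γ (x* x) = γ (x)²`.
Hence `γ (h x) ≤ ‖h‖ γ x` for self-adjoint `h`, and `γ (b)² = γ (b b)` yields `γ b ≤ ‖b‖` for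
self-adjoint `b` in the ideal. Conversely, if `γ b < s < ‖b‖`, the functional calculus gives `k ≠ 0`
and `w` with `‖w‖ ≤ 1 / s` and `k = k wᵐ bᵐ` for all `m`; taking `m = 2ⁿ`,
`γ k ≤ ‖k‖ (γ b / s)ᵐ → 0`, so that `k = 0`. The identity `γ (a* a) = γ (a)²` reduces the general
case to `b = a* a`.
-/

/-- `γ` restricts to a `C*`-seminorm on the linear subspace `I`: a seminorm with
`γ (star x * x) = γ x ^ 2`. It is a function on all of `A` whose values off `I` are arbitrary, and
submultiplicativity is not part of the notion. -/
structure IsCStarSeminormOn {A : Type*} [NonUnitalRing A] [StarRing A] [Module ℂ A]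
    (I : Submodule ℂ A) (γ : A → ℝ) : Prop where
  add_le : ∀ x ∈ I, ∀ y ∈ I, γ (x + y) ≤ γ x + γ y
  map_smul : ∀ (c : ℂ), ∀ x ∈ I, γ (c • x) = ‖c‖ * γ x
  map_star_mul_self : ∀ x ∈ I, γ (star x * x) = γ x ^ 2

lemma star_add_mul_mul_add_mul {R : Type*} [NonUnitalRing R] [StarRing R] {v : R}
    (hv : star v * v + (v + star v) = 0) (x : R) :
    star (x + v * x) * (x + v * x) = star x * x := by
  calc star (x + v * x) * (x + v * x)
      = star x * x + star x * (star v * v + (v + star v)) * x := by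
        simp only [star_add, star_mul]; noncomm_ring
    _ = star x * x := by rw [hv, mul_zero, zero_mul, add_zero]

section CStarAlgebra

variable {A : Type*} [NonUnitalCStarAlgebra A]

lemma exists_commute_mul_self_add_eq_zero {h : A} (hh : IsSelfAdjoint h) (hh1 : ‖h‖ ≤ 1) :
    ∃ c : A, IsSelfAdjoint c ∧ Commute h c ∧ h * h + c * c + (c + c) = 0 := by
  let f : ℝ → ℝ := fun t ↦ √(1 - t ^ 2) - 1
  have hid : cfcₙ (fun t : ℝ ↦ t) h = h := cfcₙ_id' ℝ h
  have hf_eq : ∀ t ∈ quasispectrum ℝ h, t * t + f t * f t + (f t + f t) = 0 := by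
    intro t ht
    have ht1 : |t| ≤ 1 := by
      simpa only [hid, Real.norm_eq_abs] using
        (norm_apply_le_norm_cfcₙ (fun t : ℝ ↦ t) h ht).trans (hid.symm ▸ hh1)
    have hsqrt : √(1 - t ^ 2) ^ 2 = 1 - t ^ 2 :=
      Real.sq_sqrt (sub_nonneg.2 ((sq_le_one_iff_abs_le_one t).2 ht1))
    simp only [f]
    linear_combination hsqrt
  refine ⟨cfcₙ f h, cfcₙ_predicate f h, ?_, ?_⟩
  · simpa only [hid] using cfcₙ_commute_cfcₙ (fun t : ℝ ↦ t) f h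
  · calc h * h + cfcₙ f h * cfcₙ f h + (cfcₙ f h + cfcₙ f h)
        = cfcₙ (fun t ↦ t * t + f t * f t + (f t + f t)) h := by
          rw [cfcₙ_add (fun t ↦ t * t + f t * f t) (fun t ↦ f t + f t) h,
            cfcₙ_add (fun t ↦ t * t) (fun t ↦ f t * f t) h, cfcₙ_add f f h,
            cfcₙ_mul (fun t ↦ t) (fun t ↦ t) h, cfcₙ_mul f f h, hid]
      _ = cfcₙ (fun _ : ℝ ↦ (0 : ℝ)) h := cfcₙ_congr hf_eq
      _ = 0 := cfcₙ_const_zero ℝ h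

-- `v = √(1 - h²) - 1 - i h`, so that `1 + v` is unitary in the unitization.
lemma exists_star_sub_self_eq_smul {h : A} (hh : IsSelfAdjoint h) (hh1 : ‖h‖ ≤ 1) :
    ∃ v : A, star v - v = (2 * Complex.I) • h ∧
      star v * v + (v + star v) = 0 ∧ v * star v + (star v + v) = 0 := by
  obtain ⟨c, hc, hcomm, heq⟩ := exists_commute_mul_self_add_eq_zero hh hh1
  have hstar : star (c - Complex.I • h) = c + Complex.I • h := by
    simp [star_sub, star_smul, hc.star_eq, hh.star_eq]
  refine ⟨c - Complex.I • h, ?_, ?_, ?_⟩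
  · rw [hstar]
    module
  all_goals
    rw [hstar, ← heq]
    simp only [mul_add, add_mul, mul_sub, sub_mul, smul_mul_assoc, mul_smul_comm,
      smul_add, smul_sub, smul_smul, Complex.I_mul_I, hcomm.eq]
    module

lemma sub_le_norm_cfcₙ_max_abs_sub {b : A} (hb : IsSelfAdjoint b) {s : ℝ} (hs : 0 ≤ s) :
    ‖b‖ - s ≤ ‖cfcₙ (fun t : ℝ ↦ max (|t| - s) 0) b‖ := by
  have hid : cfcₙ (fun t : ℝ ↦ t) b = b := cfcₙ_id' ℝ b
  obtain ⟨t, ht, hnorm⟩ := (IsGreatest.norm_cfcₙ (fun t : ℝ ↦ t) b).1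
  rw [hid] at hnorm
  calc ‖b‖ - s = |t| - s := by rw [← hnorm]; rfl
    _ ≤ ‖max (|t| - s) 0‖ := (le_max_left _ _).trans (le_abs_self _)
    _ ≤ _ := norm_apply_le_norm_cfcₙ (fun t : ℝ ↦ max (|t| - s) 0) b ht
      (by fun_prop) (by simp [hs])

lemma abs_div_max_sq_le_inv (t : ℝ) {s : ℝ} (hs : 0 < s) : |t / max (t ^ 2) (s ^ 2)| ≤ s⁻¹ := by
  have hpos : 0 < max (t ^ 2) (s ^ 2) := lt_max_of_lt_right (by positivity)
  have hle : |t| * s ≤ max (t ^ 2) (s ^ 2) := by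
    rcases le_total |t| s with h | h
    · exact le_max_of_le_right (by nlinarith)
    · exact le_max_of_le_left (by nlinarith [sq_abs t, abs_nonneg t])
  rwa [abs_div, abs_of_pos hpos, div_le_iff₀ hpos, inv_mul_eq_div, le_div_iff₀ hs]

lemma exists_ne_zero_mul_mul_eq_self {b : A} (hb : IsSelfAdjoint b) {s : ℝ} (hs : 0 < s)
    (hsb : s < ‖b‖) :
    ∃ w k : A, IsSelfAdjoint w ∧ IsSelfAdjoint k ∧ Commute w b ∧ ‖w‖ ≤ s⁻¹ ∧
      k * (w * b) = k ∧ k ≠ 0 := by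
  let f : ℝ → ℝ := fun t ↦ max (|t| - s) 0
  let g : ℝ → ℝ := fun t ↦ t / max (t ^ 2) (s ^ 2)
  have hf : Continuous f := by fun_prop
  have hg : Continuous g := continuous_id.div (by fun_prop) fun t ↦
    (lt_max_of_lt_right (by positivity : 0 < s ^ 2)).ne'
  have hf0 : f 0 = 0 := by simp [f, hs.le]
  have hid : cfcₙ (fun t : ℝ ↦ t) b = b := cfcₙ_id' ℝ b
  have hfg : ∀ t, f t * (g t * t) = f t := by
    intro t
    rcases le_total |t| s with h | h
    · simp [f, h]
    · have ht : t ≠ 0 := abs_pos.1 (hs.trans_le h)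
      have hmax : max (t ^ 2) (s ^ 2) = t ^ 2 := max_eq_left (sq_le_sq.2 (by rwa [abs_of_pos hs]))
      simp only [g, hmax]
      field_simp
  refine ⟨cfcₙ g b, cfcₙ f b, cfcₙ_predicate g b, cfcₙ_predicate f b, ?_, ?_, ?_, ?_⟩
  · simpa only [hid] using cfcₙ_commute_cfcₙ g (fun t : ℝ ↦ t) b
  · exact norm_cfcₙ_le fun t _ ↦ abs_div_max_sq_le_inv t hs
  · calc cfcₙ f b * (cfcₙ g b * b) = cfcₙ (fun t ↦ f t * (g t * t)) b := by
          rw [cfcₙ_mul f (fun t ↦ g t * t) b, cfcₙ_mul g (fun t ↦ t) b, hid]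
      _ = cfcₙ f b := by simp only [hfg]
  · exact norm_pos_iff.1 ((sub_pos.2 hsb).trans_le (sub_le_norm_cfcₙ_max_abs_sub hb hs.le))

end CStarAlgebra

namespace IsCStarSeminormOn

section StarAlgebra

variable {A : Type*} [NonUnitalRing A] [StarRing A] [Module ℂ A] {I : Submodule ℂ A} {γ : A → ℝ}

lemma nonneg (hγ : IsCStarSeminormOn I γ) {x : A} (hx : x ∈ I) : 0 ≤ γ x := by
  have hzero : γ 0 = 0 := by simpa using hγ.map_smul 0 x hx
  have hneg : γ (-x) = γ x := by simpa using hγ.map_smul (-1) x hx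
  have hadd := hγ.add_le x hx (-x) (I.neg_mem hx)
  rw [add_neg_cancel, hzero, hneg] at hadd
  linarith

lemma map_add_mul (hγ : IsCStarSeminormOn I γ) (hI : ∀ a : A, ∀ x ∈ I, a * x ∈ I) {v x : A}
    (hv : star v * v + (v + star v) = 0) (hx : x ∈ I) : γ (x + v * x) = γ x := by
  have hvx : x + v * x ∈ I := I.add_mem hx (hI v x hx)
  rw [← sq_eq_sq₀ (hγ.nonneg hvx) (hγ.nonneg hx), ← hγ.map_star_mul_self _ hvx,
    star_add_mul_mul_add_mul hv, hγ.map_star_mul_self x hx]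

end StarAlgebra

section CStarAlgebra

variable {A : Type*} [NonUnitalCStarAlgebra A] {I : Submodule ℂ A} {γ : A → ℝ}

lemma map_mul_le_of_norm_le_one (hγ : IsCStarSeminormOn I γ) (hI : ∀ a : A, ∀ x ∈ I, a * x ∈ I)
    {h x : A} (hh : IsSelfAdjoint h) (hh1 : ‖h‖ ≤ 1) (hx : x ∈ I) : γ (h * x) ≤ γ x := by
  obtain ⟨v, hvh, hv, hv'⟩ := exists_star_sub_self_eq_smul hh hh1
  have hmem : ∀ a : A, x + a * x ∈ I := fun a ↦ I.add_mem hx (hI a x hx)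
  have hdiff : (2 * Complex.I) • (h * x) = (x + star v * x) + (-1 : ℂ) • (x + v * x) := by
    rw [← smul_mul_assoc, ← hvh, sub_mul]
    module
  have htwo : 2 * γ (h * x) ≤ 2 * γ x := by
    calc 2 * γ (h * x) = γ ((2 * Complex.I) • (h * x)) := by
          simp [hγ.map_smul _ _ (hI h x hx)]
      _ ≤ γ (x + star v * x) + γ ((-1 : ℂ) • (x + v * x)) :=
          hdiff ▸ hγ.add_le _ (hmem _) _ (I.smul_mem _ (hmem _))
      _ = γ x + γ x := by
          rw [hγ.map_smul _ _ (hmem v), hγ.map_add_mul hI hv hx,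
            hγ.map_add_mul hI (by rwa [star_star]) hx]
          simp
      _ = 2 * γ x := (two_mul _).symm
  linarith

lemma map_mul_le (hγ : IsCStarSeminormOn I γ) (hI : ∀ a : A, ∀ x ∈ I, a * x ∈ I)
    {h x : A} (hh : IsSelfAdjoint h) (hx : x ∈ I) : γ (h * x) ≤ ‖h‖ * γ x := by
  rcases eq_or_ne h 0 with rfl | h0
  · simpa using (hγ.map_smul 0 x hx).le
  let u : A := (‖h‖⁻¹ : ℝ) • h
  have hu : IsSelfAdjoint u := (IsSelfAdjoint.all ‖h‖⁻¹).smul hh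
  have hu1 : ‖u‖ ≤ 1 := by simp [u, norm_smul, h0]
  have hhu : h = (‖h‖ : ℂ) • u := by simp [u, h0, smul_smul]
  calc γ (h * x) = γ ((‖h‖ : ℂ) • (u * x)) := by rw [← smul_mul_assoc, ← hhu]
    _ = ‖h‖ * γ (u * x) := by
      rw [hγ.map_smul _ _ (hI u x hx), Complex.norm_real, norm_norm]
    _ ≤ ‖h‖ * γ x := by gcongr; exact hγ.map_mul_le_of_norm_le_one hI hu hu1 hx

lemma map_mul_self (hγ : IsCStarSeminormOn I γ) {b : A} (hb : IsSelfAdjoint b) (hbI : b ∈ I) :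
    γ (b * b) = γ b ^ 2 := by
  simpa only [hb.star_eq] using hγ.map_star_mul_self b hbI

lemma map_le_norm (hγ : IsCStarSeminormOn I γ) (hI : ∀ a : A, ∀ x ∈ I, a * x ∈ I)
    {b : A} (hb : IsSelfAdjoint b) (hbI : b ∈ I) : γ b ≤ ‖b‖ := by
  have hsq : γ b * γ b ≤ ‖b‖ * γ b := by
    simpa only [← sq, hγ.map_mul_self hb hbI] using hγ.map_mul_le hI hb hbI
  rcases (hγ.nonneg hbI).eq_or_lt with h0 | hpos
  · exact h0 ▸ norm_nonneg b
  · exact le_of_mul_le_mul_right hsq hpos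

lemma map_le_norm_mul_pow (hγ : IsCStarSeminormOn I γ) (hI : ∀ a : A, ∀ x ∈ I, a * x ∈ I)
    {k w b : A} (hk : IsSelfAdjoint k) (hw : IsSelfAdjoint w) (hb : IsSelfAdjoint b) (hbI : b ∈ I)
    (hwb : Commute w b) (hkwb : k * (w * b) = k) (n : ℕ) :
    γ k ≤ ‖k‖ * (‖w‖ * γ b) ^ 2 ^ n := by
  induction n generalizing w b with
  | zero =>
    calc γ k = γ (k * (w * b)) := by rw [hkwb]
      _ ≤ ‖k‖ * γ (w * b) := hγ.map_mul_le hI hk (hI w b hbI)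
      _ ≤ ‖k‖ * (‖w‖ * γ b) ^ 2 ^ 0 := by
        rw [pow_zero, pow_one]
        gcongr
        exact hγ.map_mul_le hI hw hbI
  | succ n ih =>
    have hkwb_sq : k * (w * w * (b * b)) = k := by
      rw [hwb.mul_mul_mul_comm, ← mul_assoc, hkwb, hkwb]
    calc γ k ≤ ‖k‖ * (‖w * w‖ * γ (b * b)) ^ 2 ^ n :=
          ih ((hw.commute_iff hw).1 rfl) ((hb.commute_iff hb).1 rfl) (hI b b hbI)
            ((hwb.mul_right hwb).mul_left (hwb.mul_right hwb)) hkwb_sq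
      _ = ‖k‖ * (‖w‖ * γ b) ^ 2 ^ (n + 1) := by
        rw [hw.norm_mul_self, hγ.map_mul_self hb hbI, ← mul_pow, ← pow_mul, ← pow_succ']

lemma norm_le_map (hγ : IsCStarSeminormOn I γ) (hI : ∀ a : A, ∀ x ∈ I, a * x ∈ I)
    (hγ0 : ∀ x ∈ I, γ x = 0 → x = 0) {b : A} (hb : IsSelfAdjoint b) (hbI : b ∈ I) :
    ‖b‖ ≤ γ b := by
  by_contra! hlt
  have hγb := hγ.nonneg hbI
  obtain ⟨s, hγs, hsb⟩ := exists_between hlt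
  have hs : 0 < s := hγb.trans_lt hγs
  obtain ⟨w, k, hw, hk, hwb, hws, hkwb, hk0⟩ := exists_ne_zero_mul_mul_eq_self hb hs hsb
  have hkI : k ∈ I := hkwb ▸ hI k _ (hI w b hbI)
  have hlt_one : ‖w‖ * γ b < 1 :=
    calc ‖w‖ * γ b ≤ s⁻¹ * γ b := by gcongr
      _ < 1 := by rwa [inv_mul_lt_one₀ hs]
  have hlim : Filter.Tendsto (fun n : ℕ ↦ ‖k‖ * (‖w‖ * γ b) ^ 2 ^ n) Filter.atTop (nhds 0) := by
    simpa only [mul_zero, Function.comp_def] using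
      ((tendsto_pow_atTop_nhds_zero_of_lt_one (by positivity) hlt_one).comp
        (tendsto_pow_atTop_atTop_of_one_lt one_lt_two)).const_mul ‖k‖
  have hγk : γ k ≤ 0 :=
    ge_of_tendsto' hlim (hγ.map_le_norm_mul_pow hI hk hw hb hbI hwb hkwb)
  exact hk0 (hγ0 k hkI (hγk.antisymm (hγ.nonneg hkI)))

end CStarAlgebra

end IsCStarSeminormOn

theorem stmt_12_general {A : Type*} [NonUnitalCStarAlgebra A] (I : Submodule ℂ A)
    (hI : ∀ a : A, ∀ x ∈ I, a * x ∈ I) (γ : A → ℝ) (hγ : IsCStarSeminormOn I γ)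
    (hγ0 : ∀ x ∈ I, γ x = 0 → x = 0) : ∀ a ∈ I, γ a = ‖a‖ := by
  intro a ha
  have hb : IsSelfAdjoint (star a * a) := .star_mul_self a
  have hbI : star a * a ∈ I := hI _ a ha
  have hγb : γ (star a * a) = ‖star a * a‖ :=
    (hγ.map_le_norm hI hb hbI).antisymm (hγ.norm_le_map hI hγ0 hb hbI)
  rwa [hγ.map_star_mul_self a ha, CStarRing.norm_star_mul_self, ← sq,
    sq_eq_sq₀ (hγ.nonneg ha) (norm_nonneg a)] at hγb

/-- Let `I` be a (not necessarily closed) `*`-ideal of a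
`C*`-algebra `A`.  Then the unique `C*`-norm on `I` is the restriction of the
norm of `A`: if `γ` is a `C*`-norm on `I`, then `γ(a) = ‖a‖` for all `a ∈ I`. -/
theorem stmt_12 {A : Type*} [NonUnitalNormedRing A] [NormedSpace ℂ A]
    [CompleteSpace A] [StarRing A] [CStarRing A] [StarModule ℂ A]
    [IsScalarTower ℂ A A] [SMulCommClass ℂ A A]
    (I : Set A) (hzero : (0 : A) ∈ I)
    (hadd : ∀ x ∈ I, ∀ y ∈ I, x + y ∈ I)
    (hsmul : ∀ (c : ℂ), ∀ x ∈ I, c • x ∈ I)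
    (hstar : ∀ x ∈ I, star x ∈ I)
    (hmull : ∀ (a : A), ∀ x ∈ I, a * x ∈ I)
    (hmulr : ∀ (a : A), ∀ x ∈ I, x * a ∈ I)
    (γ : A → ℝ)
    (hγ_add : ∀ x ∈ I, ∀ y ∈ I, γ (x + y) ≤ γ x + γ y)
    (hγ_smul : ∀ (c : ℂ), ∀ x ∈ I, γ (c • x) = ‖c‖ * γ x)
    (hγ_mul : ∀ x ∈ I, ∀ y ∈ I, γ (x * y) ≤ γ x * γ y)
    (hγ_star : ∀ x ∈ I, γ (star x * x) = (γ x) ^ 2)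
    (hγ_norm : ∀ x ∈ I, γ x = 0 → x = 0) :
    ∀ a ∈ I, γ a = ‖a‖ := by
  let _ : NonUnitalCStarAlgebra A := {}
  exact stmt_12_general ⟨⟨⟨I, fun {x y} hx hy ↦ hadd x hx y hy⟩, hzero⟩, fun c x hx ↦ hsmul c x hx⟩
    hmull γ ⟨hγ_add, hγ_smul, hγ_star⟩ hγ_norm
end
end

section
/- Let A be an admissible Banach *-algebra and I a dense *-ideal of A, not necessarily closed. Then any C*-norm on I can be uniquely extended to a C*-norm on A. -/
noncomputable section

open scoped ComplexConjugate

/-!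
A C*-seminorm `α` on a `*`-ideal `I` is automatically dominated by the norm. If `a = a*` and
`‖a‖ < 1`, then `1 - a²` has a self-adjoint square root `s` commuting with `a` in the unitization
of `A`, and `a` is the average of the unitaries `a ± i s`. Left multiplication by a unitary
preserves `x* x`, hence `α`, so `α (a x) ≤ α x` for `x ∈ I`. The C*-identity turns this into
`α (a x) ≤ ‖a‖ α x` for all `a`, and then into `α x ^ 2 = α (x* x) ≤ ‖x‖ α x`. Therefore `α`
extends by continuity, and the extension is unique because the same bound, applied to the ideal
`A` itself, makes every C*-seminorm on `A` continuous. If `β` extends a norm on `I` and `β a = 0`,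
then `β (a x) = 0`, so `a x = 0`, for all `x ∈ I`; by density `a a* = 0`, and `a = 0` by
admissibility.
-/

theorem norm_mul_self_sub_mul_self_le {A : Type*} [NonUnitalSeminormedRing A] (u v : A) :
    ‖u * u - v * v‖ ≤ (‖u‖ + ‖v‖) * ‖u - v‖ :=
  calc ‖u * u - v * v‖ = ‖u * (u - v) + (u - v) * v‖ := by congr 1; noncomm_ring
    _ ≤ ‖u‖ * ‖u - v‖ + ‖u - v‖ * ‖v‖ := norm_add_le_of_le (norm_mul_le _ _) (norm_mul_le _ _)
    _ = (‖u‖ + ‖v‖) * ‖u - v‖ := by ring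

section QuasiSqrt

open Metric NonUnitalAlgebra

variable {A : Type*} [NonUnitalNormedRing A] [NormedSpace ℝ A]

theorem lipschitzOnWith_half_smul_add_mul_self (h : A) (r : NNReal) :
    LipschitzOnWith r (fun u ↦ (2⁻¹ : ℝ) • (h + u * u)) (closedBall 0 r) := by
  refine LipschitzOnWith.of_dist_le_mul fun u hu v hv ↦ ?_
  rw [mem_closedBall_zero_iff] at hu hv
  rw [dist_eq_norm, dist_eq_norm, ← smul_sub, add_sub_add_left_eq_sub, norm_smul,
    Real.norm_of_nonneg (by positivity), inv_mul_le_iff₀ two_pos, ← mul_assoc]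
  refine (norm_mul_self_sub_mul_self_le u v).trans ?_
  gcongr
  linarith

-- In the unitization the equation says `(1 - u) ^ 2 = 1 - h`: this is Ford's square root lemma.
theorem exists_mem_elemental_add_self_sub_mul_self_eq [CompleteSpace A] [IsScalarTower ℝ A A]
    [SMulCommClass ℝ A A] {h : A} (hh : ‖h‖ < 1) :
    ∃ u ∈ elemental ℝ h, ‖u‖ ≤ ‖h‖ ∧ u + u - u * u = h := by
  set f : A → A := fun u ↦ (2⁻¹ : ℝ) • (h + u * u)
  set s : Set A := closedBall 0 ‖h‖ ∩ elemental ℝ h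
  have maps : Set.MapsTo f s s := by
    rintro u ⟨hu, hu_mem⟩
    refine ⟨?_, (elemental ℝ h).smul_mem' _
      (add_mem (elemental.self_mem ℝ h) (mul_mem hu_mem hu_mem))⟩
    rw [mem_closedBall_zero_iff] at hu ⊢
    have huu : ‖u * u‖ ≤ ‖h‖ :=
      calc ‖u * u‖ ≤ ‖u‖ * ‖u‖ := norm_mul_le u u
        _ ≤ ‖h‖ * 1 := by gcongr; exact hu.trans hh.le
        _ = ‖h‖ := mul_one _
    rw [norm_smul, Real.norm_of_nonneg (by positivity), inv_mul_le_iff₀ two_pos, two_mul]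
    exact norm_add_le_of_le le_rfl huu
  have contracting : ContractingWith ‖h‖₊ (maps.restrict f s s) :=
    ⟨hh, ((lipschitzOnWith_half_smul_add_mul_self h ‖h‖₊).mono
      Set.inter_subset_left).mapsToRestrict maps⟩
  have complete : IsComplete s := (isClosed_closedBall.inter (elemental.isClosed ℝ h)).isComplete
  obtain ⟨u, ⟨hu, hu_mem⟩, hfix, -⟩ := contracting.exists_fixedPoint' complete maps
    ⟨mem_closedBall_self (norm_nonneg h), zero_mem _⟩ (edist_ne_top 0 (f 0))
  refine ⟨u, hu_mem, mem_closedBall_zero_iff.1 hu, ?_⟩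
  have two_smul_u : u + u = h + u * u := by
    rw [← two_smul ℝ u]
    exact ((inv_smul_eq_iff₀ (two_ne_zero' ℝ)).1 hfix).symm
  rw [two_smul_u, add_sub_cancel_right]

theorem eq_of_add_self_sub_mul_self_eq {u v : A} (hu : ‖u‖ < 1) (hv : ‖v‖ < 1)
    (huv : u + u - u * u = v + v - v * v) : u = v := by
  have two_smul_sub : (2 : ℝ) • (u - v) = u * u - v * v := by
    rw [two_smul, ← sub_eq_zero, ← sub_eq_zero.2 huv]
    abel
  have norm_le : 2 * ‖u - v‖ ≤ (‖u‖ + ‖v‖) * ‖u - v‖ := by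
    simpa only [← two_smul_sub, norm_smul, Real.norm_ofNat] using norm_mul_self_sub_mul_self_le u v
  rw [← sub_eq_zero, ← norm_le_zero_iff]
  nlinarith

theorem isSelfAdjoint_of_add_self_sub_mul_self [StarRing A] [NormedStarGroup A] {u : A}
    (hu : ‖u‖ < 1) (h : IsSelfAdjoint (u + u - u * u)) : IsSelfAdjoint u :=
  eq_of_add_self_sub_mul_self_eq (by rwa [norm_star]) hu
    (by simpa only [star_sub, star_add, star_mul] using h.star_eq)

end QuasiSqrt

theorem star_mul_self_mul_add_smul_sub_mul {A : Type*} [NonUnitalRing A] [Module ℂ A]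
    [IsScalarTower ℂ A A] [SMulCommClass ℂ A A] [StarRing A] [StarModule ℂ A] {a u : A}
    (ha : IsSelfAdjoint a) (hu : IsSelfAdjoint u) (hau : Commute a u)
    (h : u + u - u * u = a * a) {ε : ℂ} (hε : star ε = -ε) (hεε : ε * ε = -1) (x : A) :
    star (a * x + ε • (x - u * x)) * (a * x + ε • (x - u * x)) = star x * x := by
  have cross : star x * a * (x - u * x) = (star x - star x * u) * (a * x) := by
    have comm : a * (u * x) = u * (a * x) := by rw [← mul_assoc, hau.eq, mul_assoc]
    simp only [mul_sub, sub_mul, mul_assoc, comm]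
  have diag : (star x - star x * u) * (x - u * x) = star x * x - star x * (a * a) * x := by
    rw [← h]
    noncomm_ring
  calc star (a * x + ε • (x - u * x)) * (a * x + ε • (x - u * x))
      = (star x * a - ε • (star x - star x * u)) * (a * x + ε • (x - u * x)) := by
        rw [star_add, star_smul, star_sub, star_mul, star_mul, ha.star_eq, hu.star_eq, hε, neg_smul,
          ← sub_eq_add_neg]
    _ = star x * a * (a * x) + ε • (star x * a * (x - u * x))
          - ε • ((star x - star x * u) * (a * x))
          - (ε * ε) • ((star x - star x * u) * (x - u * x)) := by
        simp only [sub_mul _ (ε • _), mul_add, mul_smul_comm, smul_mul_assoc, smul_smul]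
        abel
    _ = star x * x := by
        rw [cross, diag, hεε]
        simp only [neg_smul, one_smul, mul_assoc]
        abel

namespace IsCStarSeminormAlg

section Algebraic

variable {B : Type*} [NonUnitalRing B] [Module ℂ B] [StarRing B] {α : B → ℝ}

/-- A C*-seminorm on a complex `*`-algebra as a seminorm on the underlying vector space, giving
access to Mathlib's API for seminorms. -/
def toSeminorm (hα : IsCStarSeminormAlg α) : Seminorm ℂ B :=
  Seminorm.of α hα.1 hα.2.1

theorem nonneg (hα : IsCStarSeminormAlg α) (x : B) : 0 ≤ α x :=
  apply_nonneg hα.toSeminorm x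

theorem map_eq_of_star_mul_self_eq (hα : IsCStarSeminormAlg α) {x y : B}
    (h : star x * x = star y * y) : α x = α y := by
  rw [← sq_eq_sq₀ (hα.nonneg x) (hα.nonneg y), ← hα.2.2.2, ← hα.2.2.2, h]

theorem map_star (hα : IsCStarSeminormAlg α) (x : B) : α (star x) = α x := by
  have le_map_star (y : B) : α y ≤ α (star y) := by
    have h : α y ^ 2 ≤ α (star y) * α y := hα.2.2.2 y ▸ hα.2.2.1 (star y) y
    by_contra! hlt
    nlinarith [hα.nonneg y, hα.nonneg (star y)]
  exact le_antisymm (by simpa only [star_star] using le_map_star (star x)) (le_map_star x)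

end Algebraic

section Dense

variable {A : Type*} [NonUnitalRing A] [Module ℂ A] [StarRing A] [TopologicalSpace A]
  [ContinuousMul A] {β : A → ℝ}

theorem of_dense [ContinuousAdd A] [ContinuousConstSMul ℂ A] [ContinuousStar A]
    {S : NonUnitalStarSubalgebra ℂ A} (hS : Dense (S : Set A)) (hβ : Continuous β)
    (h : IsCStarSeminormAlg fun x : S ↦ β x) : IsCStarSeminormAlg β := by
  refine ⟨fun a b ↦ ?_, fun c a ↦ ?_, fun a b ↦ ?_, fun a ↦ ?_⟩
  · induction a, b using hS.denseRange_val.induction_on₂ with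
    | hp => exact isClosed_le (by fun_prop) (by fun_prop)
    | h x y => exact h.1 x y
  · induction a using hS.denseRange_val.induction_on with
    | hp => exact isClosed_eq (by fun_prop) (by fun_prop)
    | ih x => exact h.2.1 c x
  · induction a, b using hS.denseRange_val.induction_on₂ with
    | hp => exact isClosed_le (by fun_prop) (by fun_prop)
    | h x y => exact h.2.2.1 x y
  · induction a using hS.denseRange_val.induction_on with
    | hp => exact isClosed_eq (by fun_prop) (by fun_prop)
    | ih x => exact h.2.2.2 x

theorem eq_zero_of_map_eq_zero_of_dense [T2Space A] (hadm : ∀ a : A, star a * a = 0 → a = 0)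
    {I : Set A} (hd : Dense I) (hI : ∀ a : A, ∀ x ∈ I, a * x ∈ I) (hβ : IsCStarSeminormAlg β)
    (hβI : ∀ x ∈ I, β x = 0 → x = 0) {a : A} (ha : β a = 0) : a = 0 := by
  have mul_mem_eq_zero : ∀ x ∈ I, a * x = 0 := fun x hx ↦
    hβI _ (hI a x hx) <| le_antisymm (by simpa only [ha, zero_mul] using hβ.2.2.1 a x)
      (hβ.nonneg _)
  have mul_eq_zero : (a * ·) = fun _ : A ↦ 0 :=
    Continuous.ext_on hd (by fun_prop) (by fun_prop) mul_mem_eq_zero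
  refine star_eq_zero.1 (hadm (star a) ?_)
  rw [star_star]
  exact congrFun mul_eq_zero (star a)

end Dense

section Ideal

variable {A : Type*} [NonUnitalNormedRing A] [NormedSpace ℂ A] [CompleteSpace A] [StarRing A]
  [NormedStarGroup A] [StarModule ℂ A] [IsScalarTower ℂ A A] [SMulCommClass ℂ A A]
  {I : NonUnitalStarSubalgebra ℂ A} {α : I → ℝ}

theorem map_mul_le_of_isSelfAdjoint (hα : IsCStarSeminormAlg α)
    (hI : ∀ a : A, ∀ x ∈ I, a * x ∈ I) {a : A} (ha : IsSelfAdjoint a) (ha_lt : ‖a‖ < 1) (x : I) :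
    α ⟨a * x, hI a x x.2⟩ ≤ α x := by
  have haa : ‖a * a‖ < 1 := (norm_mul_le a a).trans_lt (by nlinarith [norm_nonneg a])
  obtain ⟨u, hu_mem, hu_le, hua⟩ := exists_mem_elemental_add_self_sub_mul_self_eq haa
  have hu : IsSelfAdjoint u := isSelfAdjoint_of_add_self_sub_mul_self (hu_le.trans_lt haa) <| by
    rw [hua]
    exact ha.commute_iff ha |>.1 (.refl a)
  have hau : Commute a u := by
    have a_mem : a ∈ Set.centralizer {a * a} := by simp [Set.mem_centralizer_iff, mul_assoc]
    exact NonUnitalAlgebra.elemental.le_centralizer_centralizer ℝ (a * a) hu_mem a a_mem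
  let ax : I := ⟨a * x, hI a x x.2⟩
  let y : I := x - ⟨u * x, hI u x x.2⟩
  -- `ax + ε • y` is the product of the unitary `a + ε (1 - u)` and `x`.
  have map_unitary_mul {ε : ℂ} (hε : star ε = -ε) (hεε : ε * ε = -1) : α (ax + ε • y) = α x :=
    hα.map_eq_of_star_mul_self_eq <| Subtype.ext <|
      star_mul_self_mul_add_smul_sub_mul ha hu hau hua hε hεε (x : A)
  have average : (2 : ℂ) • ax = (ax + Complex.I • y) + (ax + (-Complex.I) • y) := by module
  have two_mul_le : 2 * α ax ≤ 2 * α x :=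
    calc 2 * α ax = α ((2 : ℂ) • ax) := by rw [hα.2.1, Complex.norm_ofNat]
      _ ≤ α (ax + Complex.I • y) + α (ax + (-Complex.I) • y) := average ▸ hα.1 _ _
      _ = 2 * α x := by
        rw [map_unitary_mul (by simp) (by simp), map_unitary_mul (by simp) (by simp), two_mul]
  exact le_of_mul_le_mul_left two_mul_le two_pos

theorem map_mul_le_of_norm_lt_one (hα : IsCStarSeminormAlg α) (hI : ∀ a : A, ∀ x ∈ I, a * x ∈ I)
    {a : A} (ha : ‖a‖ < 1) (x : I) : α ⟨a * x, hI a x x.2⟩ ≤ α x := by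
  have haa : ‖star a * a‖ < 1 :=
    (norm_mul_le _ _).trans_lt (by rw [norm_star]; nlinarith [norm_nonneg a])
  let ax : I := ⟨a * x, hI a x x.2⟩
  let aax : I := ⟨star a * a * x, hI _ x x.2⟩
  have star_ax_mul : star ax * ax = star x * aax := Subtype.ext <| by
    simp [ax, aax, mul_assoc]
  refine le_of_sq_le_sq ?_ (hα.nonneg x)
  calc α ax ^ 2 = α (star x * aax) := by rw [← hα.2.2.2, star_ax_mul]
    _ ≤ α (star x) * α aax := hα.2.2.1 _ _
    _ ≤ α x * α x := by
      rw [hα.map_star]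
      gcongr
      · exact hα.nonneg x
      · exact hα.map_mul_le_of_isSelfAdjoint hI (.star_mul_self a) haa x
    _ = α x ^ 2 := (sq _).symm

theorem map_mul_le_norm_mul (hα : IsCStarSeminormAlg α) (hI : ∀ a : A, ∀ x ∈ I, a * x ∈ I)
    (a : A) (x : I) : α ⟨a * x, hI a x x.2⟩ ≤ ‖a‖ * α x := by
  refine le_mul_of_forall_lt₀ fun t ht s hs ↦ ?_
  have ht0 : 0 < t := (norm_nonneg a).trans_lt ht
  have norm_t : ‖(t : ℂ)‖ = t := Complex.norm_of_nonneg ht0.le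
  have scaled_lt : ‖(t : ℂ)⁻¹ • a‖ < 1 := by
    rwa [norm_smul, norm_inv, norm_t, inv_mul_lt_one₀ ht0]
  have eq_smul : (⟨a * x, hI a x x.2⟩ : I) = (t : ℂ) • ⟨((t : ℂ)⁻¹ • a) * x, hI _ x x.2⟩ :=
    Subtype.ext <| by
      simp [smul_mul_assoc, smul_inv_smul₀ (Complex.ofReal_ne_zero.2 ht0.ne')]
  rw [eq_smul, hα.2.1, norm_t]
  gcongr
  exact (hα.map_mul_le_of_norm_lt_one hI scaled_lt x).trans hs.le

theorem le_norm (hα : IsCStarSeminormAlg α) (hI : ∀ a : A, ∀ x ∈ I, a * x ∈ I) (x : I) :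
    α x ≤ ‖x‖ := by
  have h : α x ^ 2 ≤ ‖x‖ * α x :=
    calc α x ^ 2 = α (star x * x) := (hα.2.2.2 x).symm
      _ ≤ ‖star (x : A)‖ * α x := hα.map_mul_le_norm_mul hI (star (x : A)) x
      _ = ‖x‖ * α x := by rw [norm_star]; rfl
  by_contra! hlt
  nlinarith [norm_nonneg x]

theorem uniformContinuous (hα : IsCStarSeminormAlg α) (hI : ∀ a : A, ∀ x ∈ I, a * x ∈ I) :
    UniformContinuous α :=
  Seminorm.uniformContinuous (p := hα.toSeminorm) (r := 1) <|
    Filter.mem_of_superset (Metric.ball_mem_nhds 0 one_pos) fun x hx ↦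
      hα.toSeminorm.mem_ball_zero.2 <|
        (hα.le_norm hI x).trans_lt (mem_ball_zero_iff.1 hx)

protected theorem continuous {β : A → ℝ} (hβ : IsCStarSeminormAlg β) : Continuous β := by
  have h : IsCStarSeminormAlg fun x : (⊤ : NonUnitalStarSubalgebra ℂ A) ↦ β x :=
    ⟨fun x y ↦ hβ.1 x y, fun c x ↦ hβ.2.1 c x, fun x y ↦ hβ.2.2.1 x y, fun x ↦ hβ.2.2.2 x⟩
  exact (h.uniformContinuous fun _ _ _ ↦ trivial).continuous.comp
    (continuous_id.subtype_mk fun _ ↦ trivial)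

theorem existsUnique_extension (hd : Dense (I : Set A)) (hI : ∀ a : A, ∀ x ∈ I, a * x ∈ I)
    (hα : IsCStarSeminormAlg α) :
    ∃! β : A → ℝ, IsCStarSeminormAlg β ∧ ∀ x : I, β x = α x := by
  have huc := hα.uniformContinuous hI
  have extend_coe (x : I) : hd.extend α x = α x := hd.extend_of_ind huc x
  refine ⟨hd.extend α, ⟨?_, extend_coe⟩, fun β ⟨hβ, hβα⟩ ↦ ?_⟩
  · refine of_dense hd (hd.uniformContinuous_extend huc).continuous ?_
    simpa only [extend_coe] using hα
  · exact hβ.continuous.ext_on hd (hd.uniformContinuous_extend huc).continuous fun x hx ↦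
      (hβα ⟨x, hx⟩).trans (extend_coe ⟨x, hx⟩).symm

end Ideal

end IsCStarSeminormAlg

/-- Let `A` be an admissible Banach `*`-algebra and `I` a
dense `*`-ideal of `A`, not necessarily closed.  Then any `C*`-norm on `I`
extends uniquely to a `C*`-norm on `A`. -/
theorem stmt_13 {A : Type*} [NonUnitalNormedRing A] [NormedSpace ℂ A]
    [CompleteSpace A] [StarRing A] [NormedStarGroup A] [StarModule ℂ A]
    [IsScalarTower ℂ A A] [SMulCommClass ℂ A A]
    (hadm : ∀ a : A, star a * a = 0 → a = 0)
    (I : Set A) (hzero : (0 : A) ∈ I) (hdense : Dense I)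
    (hadd : ∀ x ∈ I, ∀ y ∈ I, x + y ∈ I)
    (hsmul : ∀ (c : ℂ), ∀ x ∈ I, c • x ∈ I)
    (hstar : ∀ x ∈ I, star x ∈ I)
    (hmull : ∀ (a : A), ∀ x ∈ I, a * x ∈ I)
    (hmulr : ∀ (a : A), ∀ x ∈ I, x * a ∈ I)
    (γ : A → ℝ)
    (hγ_add : ∀ x ∈ I, ∀ y ∈ I, γ (x + y) ≤ γ x + γ y)
    (hγ_smul : ∀ (c : ℂ), ∀ x ∈ I, γ (c • x) = ‖c‖ * γ x)
    (hγ_mul : ∀ x ∈ I, ∀ y ∈ I, γ (x * y) ≤ γ x * γ y)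
    (hγ_star : ∀ x ∈ I, γ (star x * x) = (γ x) ^ 2)
    (hγ_norm : ∀ x ∈ I, γ x = 0 → x = 0) :
    ∃ β : A → ℝ,
      (IsCStarSeminormAlg β ∧ (∀ a : A, β a = 0 → a = 0) ∧ ∀ x ∈ I, β x = γ x) ∧
      ∀ β' : A → ℝ,
        (IsCStarSeminormAlg β' ∧ (∀ a : A, β' a = 0 → a = 0) ∧
          ∀ x ∈ I, β' x = γ x) → β' = β := by
  let J : NonUnitalStarSubalgebra ℂ A :=
    { carrier := I
      add_mem' := fun hx hy ↦ hadd _ hx _ hy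
      zero_mem' := hzero
      mul_mem' := fun _ hy ↦ hmull _ _ hy
      smul_mem' := hsmul
      star_mem' := hstar _ }
  have hγ : IsCStarSeminormAlg fun x : J ↦ γ x :=
    ⟨fun x y ↦ hγ_add x x.2 y y.2, fun c x ↦ hγ_smul c x x.2, fun x y ↦ hγ_mul x x.2 y y.2,
      fun x ↦ hγ_star x x.2⟩
  obtain ⟨β, ⟨hβ, hβγ⟩, β_unique⟩ := hγ.existsUnique_extension hdense hmull
  have eq_on : ∀ x ∈ I, β x = γ x := fun x hx ↦ hβγ ⟨x, hx⟩
  refine ⟨β, ⟨hβ, fun a ha ↦ ?_, eq_on⟩, fun β' ⟨hβ', _, hβ'γ⟩ ↦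
    β_unique β' ⟨hβ', fun x ↦ hβ'γ x x.2⟩⟩
  exact hβ.eq_zero_of_map_eq_zero_of_dense hadm hdense hmull
    (fun x hx h ↦ hγ_norm x hx ((eq_on x hx).symm.trans h)) ha
end
end

section
/- Let (E, A, ⟨·,·⟩) be a full C*-basic triple. Then for every a in span{⟨x,y⟩ : x,y ∈ E} ⊆ A, one has ‖a‖_A = sup{‖xa‖_E : x ∈ E, ‖x‖_E ≤ 1}; consequently A is the completion of (span{⟨x,y⟩ : x,y ∈ E}, with the operator norm), and ⟨·,·⟩ is determined by continuity from its restriction. -/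
noncomputable section

open scoped ComplexConjugate

/-- A (right) basic triple `(E, A, ⟪·,·⟫)`: a right module `E` over a complex
`*`-algebra `A`, together with an `A`-valued pairing which is conjugate-linear
in the first variable and linear in the second one, compatible with the module
structure and the involution. -/
structure BasicTriple (E A : Type*) [AddCommGroup E] [Module ℂ E]
    [NonUnitalRing A] [Module ℂ A] [StarRing A] where
  act : E → A → E
  inner : E → E → A
  act_add_left : ∀ (x y : E) (a : A), act (x + y) a = act x a + act y a
  act_add_right : ∀ (x : E) (a b : A), act x (a + b) = act x a + act x b
  act_smul_left : ∀ (c : ℂ) (x : E) (a : A), act (c • x) a = c • act x a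
  act_smul_right : ∀ (c : ℂ) (x : E) (a : A), act x (c • a) = c • act x a
  act_mul : ∀ (x : E) (a b : A), act (act x a) b = act x (a * b)
  inner_add_left : ∀ x y z : E, inner (x + y) z = inner x z + inner y z
  inner_add_right : ∀ x y z : E, inner x (y + z) = inner x y + inner x z
  inner_smul_left : ∀ (c : ℂ) (x y : E), inner (c • x) y = conj c • inner x y
  inner_smul_right : ∀ (c : ℂ) (x y : E), inner x (c • y) = c • inner x y
  inner_mul : ∀ (x y : E) (a : A), inner x y * a = inner x (act y a)
  star_inner : ∀ x y : E, star (inner x y) = inner y x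

variable {E A : Type*} [AddCommGroup E] [Module ℂ E]
    [NonUnitalRing A] [Module ℂ A] [StarRing A]

/-- The ternary product associated with a basic triple: `μ(x,y,z) = x⟪y,z⟫`. -/
def BasicTriple.mu (t : BasicTriple E A) (x y z : E) : E := t.act x (t.inner y z)

/-- The basic triple is full: `A = span{⟪x,y⟫ : x, y ∈ E}`. -/
def BasicTriple.Full (t : BasicTriple E A) : Prop :=
  Submodule.span ℂ {a : A | ∃ x y : E, t.inner x y = a} = ⊤

/-- `E` is a faithful `A`-module. -/
def BasicTriple.Faithful (t : BasicTriple E A) : Prop :=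
  ∀ a : A, (∀ x : E, t.act x a = 0) → a = 0

/-- A `C*`-basic triple: a basic triple in which `A` is a `C*`-algebra, `E`
with the associated ternary product is a `C*`-ternary ring, `E` is a Banach
right `A`-module and the pairing is continuous. -/
structure CStarBasicTriple (E A : Type*) [NormedAddCommGroup E] [NormedSpace ℂ E]
    [NonUnitalNormedRing A] [NormedSpace ℂ A] [StarRing A] [CStarRing A]
    extends BasicTriple E A where
  norm_triple_le : ∀ x y z : E, ‖act x (inner y z)‖ ≤ ‖x‖ * ‖y‖ * ‖z‖
  norm_triple_self : ∀ x : E, ‖act x (inner x x)‖ = ‖x‖ ^ 3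
  norm_act_le : ∀ (x : E) (a : A), ‖act x a‖ ≤ ‖x‖ * ‖a‖
  continuous_inner : Continuous fun p : E × E => inner p.1 p.2

/-!
Right multiplication represents `A` on `E` by contractions `x ↦ xa`, and the supremum is the
operator norm. The representation is injective: if `E a = 0`, then `⟨x, y⟩ a = ⟨x, ya⟩ = 0`, so
`A a = 0` by density and `a⋆ a = 0`.

An injective contractive homomorphism `φ` from a C⋆-algebra to a normed ring is isometric. By the
C⋆-identity it suffices that `‖h‖ ≤ ‖φ h‖` for `h ≥ 0`. Given `r > ‖φ h‖`, put `e = (h - r)₊` and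
choose `q` with `‖q‖ ≤ 1 / r` and `e q h = e`. Then `‖φ e‖ ≤ ‖φ e‖ ‖φ h‖ / r` forces `φ e = 0`,
hence `e = 0`, that is, `‖h‖ ≤ r`.
-/

open scoped NNReal MulOpposite

/-- `q` inverts `h` on the part of its spectrum above `r`, the support of the truncated `s - r`. -/
theorem exists_nnnorm_le_inv_and_cfcₙ_tsub_mul_eq {A : Type*} [NonUnitalCStarAlgebra A]
    [PartialOrder A] [StarOrderedRing A] {h : A} (hh : 0 ≤ h) {r : ℝ≥0} (hr : 0 < r) :
    ∃ q : A, ‖q‖₊ ≤ r⁻¹ ∧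
      cfcₙ (fun s : ℝ≥0 => s - r) h * (q * h) = cfcₙ (fun s : ℝ≥0 => s - r) h := by
  have hmax (s : ℝ≥0) : 0 < max s r := lt_max_of_lt_right hr
  have hcont : Continuous fun s : ℝ≥0 => s / max s r ^ 2 := by
    fun_prop (disch := exact fun s => (pow_pos (hmax s) 2).ne')
  have hbound (s : ℝ≥0) : s / max s r ^ 2 ≤ r⁻¹ :=
    calc s / max s r ^ 2 ≤ max s r / max s r ^ 2 := by gcongr; exact le_max_left s r
      _ = (max s r)⁻¹ := by field_simp [(hmax s).ne']
      _ ≤ r⁻¹ := by gcongr; exact le_max_right s r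
  have hinv (s : ℝ≥0) : (s - r) * (s / max s r ^ 2 * s) = s - r := by
    rcases le_total s r with hs | hs
    · simp [tsub_eq_zero_of_le hs]
    · have : s ≠ 0 := (hr.trans_le hs).ne'
      rw [max_eq_left hs]
      field_simp
  refine ⟨cfcₙ (fun s : ℝ≥0 => s / max s r ^ 2) h, nnnorm_cfcₙ_nnreal_le fun s _ => hbound s, ?_⟩
  nth_rewrite 3 [← cfcₙ_id' ℝ≥0 h]
  rw [← cfcₙ_mul .., ← cfcₙ_mul ..]
  simp only [hinv]

theorem norm_le_norm_map_of_nonneg {A B : Type*} [NonUnitalCStarAlgebra A] [PartialOrder A]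
    [StarOrderedRing A] [NonUnitalNormedRing B] (φ : A →ₙ+* B) (hφ : Function.Injective φ)
    (hle : ∀ a, ‖φ a‖ ≤ ‖a‖) {h : A} (hh : 0 ≤ h) : ‖h‖ ≤ ‖φ h‖ := by
  suffices ‖h‖₊ ≤ ‖φ h‖₊ from this
  refine le_of_forall_gt_imp_ge_of_dense fun r hr => ?_
  have hr0 : 0 < r := pos_of_gt hr
  obtain ⟨q, hq, hmul⟩ := exists_nnnorm_le_inv_and_cfcₙ_tsub_mul_eq hh hr0
  set e := cfcₙ (fun s : ℝ≥0 => s - r) h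
  have hlt : ‖φ (q * h)‖₊ < 1 :=
    calc ‖φ (q * h)‖₊ ≤ ‖φ q‖₊ * ‖φ h‖₊ := by rw [map_mul]; exact nnnorm_mul_le _ _
      _ ≤ r⁻¹ * ‖φ h‖₊ := by gcongr; exact (hle q).trans hq
      _ < 1 := by rwa [inv_mul_lt_iff₀ hr0, mul_one]
  have hφe : φ e = 0 := by
    by_contra hne
    have hle_mul : ‖φ e‖₊ ≤ ‖φ e‖₊ * ‖φ (q * h)‖₊ := by
      conv_lhs => rw [← hmul, map_mul]
      exact nnnorm_mul_le _ _
    exact hle_mul.not_gt (mul_lt_of_lt_one_right (nnnorm_pos.2 hne) hlt)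
  have he : ‖e‖₊ = ‖h‖₊ - r :=
    MonotoneOn.nnnorm_cfcₙ _ h (fun _ _ _ _ hst => tsub_le_tsub_right hst r)
  rw [(map_eq_zero_iff φ hφ).1 hφe, nnnorm_zero] at he
  exact tsub_eq_zero_iff_le.1 he.symm

theorem norm_map_eq_of_injective_of_norm_map_le {A B : Type*} [NonUnitalCStarAlgebra A]
    [NonUnitalNormedRing B] (φ : A →ₙ+* B) (hφ : Function.Injective φ)
    (hle : ∀ a, ‖φ a‖ ≤ ‖a‖) (a : A) : ‖φ a‖ = ‖a‖ := by
  let := CStarAlgebra.spectralOrder A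
  have := CStarAlgebra.spectralOrderedRing A
  refine (hle a).antisymm ?_
  rcases eq_or_ne a 0 with rfl | ha
  · simp
  refine le_of_mul_le_mul_left ?_ (norm_pos_iff.2 ha)
  calc ‖a‖ * ‖a‖ = ‖star a * a‖ := CStarRing.norm_star_mul_self.symm
    _ ≤ ‖φ (star a * a)‖ := norm_le_norm_map_of_nonneg φ hφ hle (star_mul_self_nonneg a)
    _ ≤ ‖φ (star a)‖ * ‖φ a‖ := by rw [map_mul]; exact norm_mul_le _ _
    _ ≤ ‖a‖ * ‖φ a‖ := by gcongr; exact (hle (star a)).trans_eq (norm_star a)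

namespace BasicTriple

theorem faithful_of_dense_span_inner {E A : Type*} [AddCommGroup E] [Module ℂ E]
    [NonUnitalNormedRing A] [NormedSpace ℂ A] [StarRing A] [CStarRing A]
    [IsScalarTower ℂ A A] [SMulCommClass ℂ A A] (t : BasicTriple E A)
    (hdense : Dense (Submodule.span ℂ {a : A | ∃ x y : E, t.inner x y = a} : Set A)) :
    t.Faithful := by
  intro a ha
  have inner_mul_eq_zero (x y : E) : t.inner x y * a = 0 := by
    rw [t.inner_mul, ha]
    simpa using t.inner_smul_right 0 x 0
  have mul_eq_zero : (ContinuousLinearMap.mul ℂ A).flip a = 0 :=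
    ContinuousLinearMap.ext_on hdense <| by rintro _ ⟨x, y, rfl⟩; exact inner_mul_eq_zero x y
  exact (CStarRing.star_mul_self_eq_zero_iff a).1 (DFunLike.congr_fun mul_eq_zero (star a))

section Contractive

variable {E A : Type*} [NormedAddCommGroup E] [NormedSpace ℂ E] [NonUnitalNormedRing A]
  [NormedSpace ℂ A] [StarRing A] (t : BasicTriple E A)
  (hact : ∀ (x : E) (a : A), ‖t.act x a‖ ≤ ‖x‖ * ‖a‖)

/-- The representation of `A` on `E` by bounded operators `x ↦ xa`. It takes values in the opposite
algebra because `A` acts on the right. -/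
def actHom : A →ₙ+* (E →L[ℂ] E)ᵐᵒᵖ where
  toFun a := .op <| LinearMap.mkContinuous
    { toFun x := t.act x a
      map_add' x y := t.act_add_left x y a
      map_smul' c x := t.act_smul_left c x a } ‖a‖ fun x => (hact x a).trans_eq (mul_comm _ _)
  map_mul' a b := MulOpposite.unop_injective <| by ext x; exact (t.act_mul x a b).symm
  map_zero' := MulOpposite.unop_injective <| by ext x; simpa using t.act_smul_right 0 x 0
  map_add' a b := MulOpposite.unop_injective <| by ext x; exact t.act_add_right x a b

theorem unop_actHom_apply (a : A) (x : E) : (t.actHom hact a).unop x = t.act x a := rfl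

theorem norm_actHom_le (a : A) : ‖t.actHom hact a‖ ≤ ‖a‖ :=
  LinearMap.mkContinuous_norm_le _ (norm_nonneg a) fun x => (hact x a).trans_eq (mul_comm _ _)

theorem norm_actHom_eq_sSup (a : A) :
    ‖t.actHom hact a‖ = sSup {s : ℝ | ∃ x : E, ‖x‖ ≤ 1 ∧ s = ‖t.act x a‖} := by
  rw [← MulOpposite.norm_unop, ← ContinuousLinearMap.sSup_unitClosedBall_eq_norm]
  congr 1
  ext s
  simp [unop_actHom_apply, eq_comm]

variable {t} in
theorem Faithful.actHom_injective (ht : t.Faithful) : Function.Injective (t.actHom hact) := by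
  refine (injective_iff_map_eq_zero _).2 fun a ha => ht a fun x => ?_
  rw [← t.unop_actHom_apply hact, ha]
  rfl

end Contractive

end BasicTriple

theorem stmt_14_general {E A : Type*} [NormedAddCommGroup E] [NormedSpace ℂ E]
    [NonUnitalCStarAlgebra A] (t : BasicTriple E A) (ht : t.Faithful)
    (hact : ∀ (x : E) (a : A), ‖t.act x a‖ ≤ ‖x‖ * ‖a‖) (a : A) :
    ‖a‖ = sSup {s : ℝ | ∃ x : E, ‖x‖ ≤ 1 ∧ s = ‖t.act x a‖} := by
  rw [← t.norm_actHom_eq_sSup hact, norm_map_eq_of_injective_of_norm_map_le (t.actHom hact)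
    (ht.actHom_injective hact) (t.norm_actHom_le hact)]

/-- Let `(E, A, ⟪·,·⟫)` be a full `C*`-basic triple.  Then
for every `a` in `span{⟪x,y⟫ : x,y ∈ E} ⊆ A` one has
`‖a‖ = sup{‖xa‖ : ‖x‖ ≤ 1}`; consequently (since the span is dense by
fullness), `A` is the completion of the span with the operator norm, and the
pairing is determined by continuity from its restriction. -/
theorem stmt_14 {E A : Type*} [NormedAddCommGroup E] [NormedSpace ℂ E]
    [CompleteSpace E] [NonUnitalNormedRing A] [NormedSpace ℂ A] [StarRing A]
    [CStarRing A] [CompleteSpace A] [StarModule ℂ A]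
    [IsScalarTower ℂ A A] [SMulCommClass ℂ A A]
    (t : CStarBasicTriple E A)
    (hfull : Dense
      ((Submodule.span ℂ {a : A | ∃ x y : E, t.inner x y = a} : Submodule ℂ A) :
        Set A)) :
    ∀ a ∈ Submodule.span ℂ {a : A | ∃ x y : E, t.inner x y = a},
      ‖a‖ = sSup {s : ℝ | ∃ x : E, ‖x‖ ≤ 1 ∧ s = ‖t.act x a‖} := by
  let : NonUnitalCStarAlgebra A := {}
  exact fun a _ =>
    stmt_14_general t.toBasicTriple (t.faithful_of_dense_span_inner hfull) t.norm_act_le a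
end
end

section
/- Let E and F be C*-ternary rings and π : E → F a homomorphism of the underlying *-trings. Then π is contractive, i.e., ‖π(x)‖ ≤ ‖x‖ for all x ∈ E, and π is isometric if and only if it is injective. -/
noncomputable section

open scoped ComplexConjugate

/-- The norm of a Banach space `E` is a `C*`-norm for the ternary product `μ`,
making `E` a `C*`-ternary ring. -/
def IsCStarTringNorm {E : Type*} [NormedAddCommGroup E] [Module ℂ E]
    (μ : E → E → E → E) : Prop :=
  (∀ x y z : E, ‖μ x y z‖ ≤ ‖x‖ * ‖y‖ * ‖z‖) ∧ (∀ x : E, ‖μ x x x‖ = ‖x‖ ^ 3)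

/-!
Left multiplication by `xx⋆`, that is `L : z ↦ μ x x z`, has norm `‖x‖ ^ 2`, and ternary
associativity together with the cube identity makes every polynomial in `L` satisfy the
C⋆-inequality.  So `L` has the norm estimates of a self-adjoint element of a C⋆-algebra, although
no C⋆-algebra of operators on the ternary ring has to be constructed.

A homomorphism `π` transports solutions `b` of `k • b = x + μ x x b`, which exist for
`‖x‖ ^ 2 < ‖k‖`.  Such solutions give a two-sided quasi-inverse of left multiplication by
`π(x)π(x)⋆`, whose spectral radius, equal to its norm `‖π x‖ ^ 2`, is thus at most `‖x‖ ^ 2`.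
Moreover `π` intertwines the real continuous functional calculi of the two left multiplications.
If `π` is injective, a function vanishing on `[-‖π x‖ ^ 2, ‖π x‖ ^ 2]` annihilates `L`, which
forces `‖x‖ ^ 2 = ‖L‖ ≤ ‖π x‖ ^ 2`.
-/

theorem notMem_spectrum_of_quasiInverse {𝕜 A : Type*} [Field 𝕜] [Ring A] [Algebra 𝕜 A]
    {a b c : A} {k : 𝕜} (hk : k ≠ 0) (hb : k • b = a + a * b) (hc : k • c = a + c * a) :
    k ∉ spectrum 𝕜 a := by
  rw [spectrum.notMem_iff, isUnit_iff_exists_and_exists]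
  refine ⟨⟨k⁻¹ • (1 + b), ?_⟩, ⟨k⁻¹ • (1 + c), ?_⟩⟩
  · rw [mul_smul_comm, inv_smul_eq_iff₀ hk, Algebra.algebraMap_eq_smul_one, sub_mul,
      smul_mul_assoc, one_mul, smul_add, hb, mul_add, mul_one]
    abel
  · rw [smul_mul_assoc, inv_smul_eq_iff₀ hk, Algebra.algebraMap_eq_smul_one, mul_sub,
      mul_smul_comm, mul_one, smul_add, hc, add_mul, one_mul]
    abel

section NormedAlgebra

open Polynomial UniformSpace Filter Topology

variable {A : Type*} [NormedRing A]

local instance completionNormedAlgebra {𝕜 : Type*} [NormedField 𝕜] [NormedAlgebra 𝕜 A] :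
    NormedAlgebra 𝕜 (Completion A) where
  norm_smul_le := norm_smul_le

variable [NormedAlgebra ℂ A]

/-- The embedding of a complex normed algebra in its completion, as an algebra homomorphism. -/
def completionAlgHom (A : Type*) [NormedRing A] [NormedAlgebra ℂ A] : A →ₐ[ℂ] Completion A :=
  { toRingHom := Completion.coeRingHom, commutes' := fun _ => rfl }

theorem aeval_coe_completion (a : A) (p : ℂ[X]) :
    aeval (a : Completion A) p = (aeval a p : A) :=
  aeval_algHom_apply (completionAlgHom A) a p

theorem spectrum_coe_completion_subset (a : A) :
    spectrum ℂ (a : Completion A) ⊆ spectrum ℂ a :=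
  AlgHom.spectrum_apply_subset (completionAlgHom A) a

theorem norm_le_norm_of_mem_spectrum [CompleteSpace A] (h1 : ‖(1 : A)‖ ≤ 1) {a : A} {k : ℂ}
    (hk : k ∈ spectrum ℂ a) : ‖k‖ ≤ ‖a‖ :=
  (spectrum.norm_le_norm_mul_of_mem hk).trans (mul_le_of_le_one_right (norm_nonneg a) h1)

/-- An element `a` of a complex normed algebra behaves like a self-adjoint element of a
C⋆-algebra: polynomials in `a` satisfy the C⋆-inequality `‖b‖ ^ 2 ≤ ‖b⋆ * b‖`, where
`b = p(a)` and `b⋆` is replaced by `p̄(a)`.  No involution on the algebra is needed. -/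
def IsCStarHermitian (a : A) : Prop :=
  ∀ p : ℂ[X], ‖aeval a p‖ ^ 2 ≤ ‖aeval a (p.map (starRingEnd ℂ) * p)‖

namespace IsCStarHermitian

variable {a : A}

theorem completion (ha : IsCStarHermitian a) : IsCStarHermitian (a : Completion A) := fun p => by
  simpa only [aeval_coe_completion, Completion.norm_coe] using ha p

theorem norm_one_le (ha : IsCStarHermitian a) : ‖(1 : A)‖ ≤ 1 := by
  have h : ‖(1 : A)‖ ^ 2 ≤ ‖(1 : A)‖ := by simpa using ha 1
  nlinarith [norm_nonneg (1 : A)]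

theorem aeval_real (ha : IsCStarHermitian a) (p : ℝ[X]) : IsCStarHermitian (aeval a p) := by
  intro q
  have hconj : (p.map (algebraMap ℝ ℂ)).map (starRingEnd ℂ) = p.map (algebraMap ℝ ℂ) := by
    rw [Polynomial.map_map]
    congr 1
    ext r
    exact Complex.conj_ofReal r
  have h := ha (q.comp (p.map (algebraMap ℝ ℂ)))
  rwa [Polynomial.map_comp, hconj, ← mul_comp, aeval_comp, aeval_comp,
    aeval_map_algebraMap] at h

theorem norm_sq_eq (ha : IsCStarHermitian a) : ‖a ^ 2‖ = ‖a‖ ^ 2 :=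
  (norm_pow_le' a two_pos).antisymm (by simpa [sq] using ha X)

theorem norm_pow_two_pow (ha : IsCStarHermitian a) (n : ℕ) : ‖a ^ 2 ^ n‖ = ‖a‖ ^ 2 ^ n := by
  induction n with
  | zero => simp
  | succ n ih =>
    have hpow : IsCStarHermitian (a ^ 2 ^ n) := by
      have h := ha.aeval_real (X ^ 2 ^ n)
      rwa [map_pow, aeval_X] at h
    rw [pow_succ, pow_mul, hpow.norm_sq_eq, ih, ← pow_mul]

theorem spectralRadius_eq_nnnorm [CompleteSpace A] (ha : IsCStarHermitian a) :
    spectralRadius ℂ a = ‖a‖₊ := by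
  have hpow (n : ℕ) : ((‖a ^ 2 ^ n‖₊ : ENNReal) ^ (1 / (2 ^ n : ℕ) : ℝ)) = ‖a‖₊ := by
    have h : ‖a ^ 2 ^ n‖₊ = ‖a‖₊ ^ 2 ^ n := NNReal.eq (ha.norm_pow_two_pow n)
    rw [h, ENNReal.coe_pow, ← ENNReal.rpow_natCast, ← ENNReal.rpow_mul]
    simp
  have hlim := (spectrum.pow_nnnorm_pow_one_div_tendsto_nhds_spectralRadius a).comp
    (tendsto_pow_atTop_atTop_of_one_lt one_lt_two)
  exact tendsto_nhds_unique (hlim.congr hpow) tendsto_const_nhds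

theorem norm_le_of_forall_mem_spectrum (ha : IsCStarHermitian a) {M : ℝ} (hM : 0 ≤ M)
    (h : ∀ k ∈ spectrum ℂ a, ‖k‖ ≤ M) : ‖a‖ ≤ M := by
  lift M to NNReal using hM
  have hr : spectralRadius ℂ (a : Completion A) ≤ M := iSup₂_le fun k hk => by
    exact_mod_cast h k (spectrum_coe_completion_subset a hk)
  rw [ha.completion.spectralRadius_eq_nnnorm, Completion.nnnorm_coe] at hr
  exact_mod_cast hr

-- Arens' trick: an element `k` of the spectrum obeys `|k + ir| ≤ ‖a + ir‖` for every real `r`,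
-- while the C⋆-inequality gives `‖a + ir‖² ≤ ‖a‖² + r²`; let `r` be large.
theorem norm_add_I_sq_le (ha : IsCStarHermitian a) (r : ℝ) :
    ‖a + algebraMap ℂ A (r * Complex.I)‖ ^ 2 ≤ ‖a‖ ^ 2 + r ^ 2 := by
  have hmul : (X + C (r * Complex.I) : ℂ[X]).map (starRingEnd ℂ) * (X + C (r * Complex.I)) =
      X ^ 2 + C ((r : ℂ) ^ 2) := by
    have hconj : conj (r * Complex.I) = -(r * Complex.I) := by simp
    have hsq : (C (r * Complex.I) * C (r * Complex.I) : ℂ[X]) = -C ((r : ℂ) ^ 2) := by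
      rw [← C_mul, ← C_neg]
      congr 1
      linear_combination (r : ℂ) ^ 2 * Complex.I_sq
    rw [Polynomial.map_add, map_X, map_C, hconj, C_neg]
    linear_combination -hsq
  have h := ha (X + C (r * Complex.I))
  rw [hmul] at h
  calc ‖a + algebraMap ℂ A (r * Complex.I)‖ ^ 2
    _ ≤ ‖a ^ 2 + algebraMap ℂ A ((r : ℂ) ^ 2)‖ := by simpa using h
    _ ≤ ‖a ^ 2‖ + ‖algebraMap ℂ A ((r : ℂ) ^ 2)‖ := norm_add_le _ _
    _ ≤ ‖a‖ ^ 2 + r ^ 2 := by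
      gcongr
      · exact ha.norm_sq_eq.le
      · rw [norm_algebraMap]
        simpa using mul_le_mul_of_nonneg_left ha.norm_one_le (sq_nonneg r)

theorem im_eq_zero_of_mem_spectrum [CompleteSpace A] (ha : IsCStarHermitian a) {k : ℂ}
    (hk : k ∈ spectrum ℂ a) : k.im = 0 := by
  have key (r : ℝ) : (k.im + r) ^ 2 ≤ ‖a‖ ^ 2 + r ^ 2 := by
    have hmem : k + r * Complex.I ∈ spectrum ℂ (a + algebraMap ℂ A (r * Complex.I)) := by
      rw [add_comm a]
      exact spectrum.add_mem_add_iff.2 hk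
    calc (k.im + r) ^ 2 = |(k + r * Complex.I).im| ^ 2 := by simp
      _ ≤ ‖k + r * Complex.I‖ ^ 2 := by gcongr; exact Complex.abs_im_le_norm _
      _ ≤ ‖a + algebraMap ℂ A (r * Complex.I)‖ ^ 2 := by
        gcongr; exact norm_le_norm_of_mem_spectrum ha.norm_one_le hmem
      _ ≤ ‖a‖ ^ 2 + r ^ 2 := ha.norm_add_I_sq_le r
  by_contra hne
  have h := key ((‖a‖ ^ 2 + 1) / (2 * k.im))
  have hr : 2 * k.im * ((‖a‖ ^ 2 + 1) / (2 * k.im)) = ‖a‖ ^ 2 + 1 := by field_simp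
  nlinarith [sq_nonneg k.im]

theorem norm_aeval_le (ha : IsCStarHermitian a) (p : ℝ[X]) {M : ℝ}
    (h : ∀ r : ℝ, |r| ≤ ‖a‖ → |p.eval r| ≤ M) : ‖aeval a p‖ ≤ M := by
  have hM : 0 ≤ M := (abs_nonneg _).trans (h 0 (by simp))
  have hc := ha.completion
  have hcoe : ((aeval a p : A) : Completion A) = aeval (a : Completion A) p := by
    rw [← aeval_map_algebraMap ℂ a, ← aeval_map_algebraMap ℂ (a : Completion A),
      aeval_coe_completion]
  rw [← Completion.norm_coe, hcoe]
  rcases subsingleton_or_nontrivial (Completion A) with _ | _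
  · simpa only [norm_of_subsingleton] using hM
  refine (hc.aeval_real p).norm_le_of_forall_mem_spectrum hM fun k hk => ?_
  rw [← aeval_map_algebraMap ℂ, spectrum.map_polynomial_aeval] at hk
  obtain ⟨l, hl, rfl⟩ := hk
  lift l to ℝ using hc.im_eq_zero_of_mem_spectrum hl
  have hla : |l| ≤ ‖a‖ := by simpa using norm_le_norm_of_mem_spectrum hc.norm_one_le hl
  have heval : (p.map (algebraMap ℝ ℂ)).eval (l : ℂ) = (p.eval l : ℝ) :=
    eval_map_apply (f := algebraMap ℝ ℂ) l
  simpa [heval] using h l hla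

theorem norm_aeval_le_norm_toContinuousMapOn (ha : IsCStarHermitian a) (p : ℝ[X]) :
    ‖aeval a p‖ ≤ ‖p.toContinuousMapOn (Set.Icc (-‖a‖) ‖a‖)‖ :=
  ha.norm_aeval_le p fun r hr =>
    (p.toContinuousMapOn (Set.Icc (-‖a‖) ‖a‖)).norm_coe_le_norm ⟨r, abs_le.1 hr⟩

end IsCStarHermitian

theorem denseRange_toContinuousMapOnAlgHom_Icc (x y : ℝ) :
    DenseRange (toContinuousMapOnAlgHom (Set.Icc x y)) := by
  intro f
  have hf := continuousMap_mem_polynomialFunctions_closure x y f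
  rwa [← SetLike.mem_coe, Subalgebra.topologicalClosure_coe, polynomialFunctions_coe] at hf

section functionalCalculus

variable [CompleteSpace A]

/-- The continuous real functional calculus `f ↦ f(a)`: the continuous extension of `p ↦ p(a)` from
real polynomials to functions on `[-‖a‖, ‖a‖]`, meaningful for a complete algebra and
`IsCStarHermitian a`.  On intervals, rather than spectra, the functional calculi of two elements are
related by restriction as soon as their norms are compared. -/
def functionalCalculus (a : A) : C(Set.Icc (-‖a‖) ‖a‖, ℝ) →L[ℝ] A :=
  (aeval a : ℝ[X] →ₐ[ℝ] A).toLinearMap.extendOfNorm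
    (toContinuousMapOnAlgHom (Set.Icc (-‖a‖) ‖a‖)).toLinearMap

variable {a : A}

theorem functionalCalculus_toContinuousMapOn (ha : IsCStarHermitian a) (p : ℝ[X]) :
    functionalCalculus a (p.toContinuousMapOn _) = aeval a p :=
  LinearMap.extendOfNorm_eq (denseRange_toContinuousMapOnAlgHom_Icc _ _)
    ⟨1, fun q => (ha.norm_aeval_le_norm_toContinuousMapOn q).trans_eq (one_mul _).symm⟩ p

theorem norm_functionalCalculus_le (ha : IsCStarHermitian a) (f : C(Set.Icc (-‖a‖) ‖a‖, ℝ)) :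
    ‖functionalCalculus a f‖ ≤ ‖f‖ :=
  (LinearMap.norm_extendOfNorm_apply_le (denseRange_toContinuousMapOnAlgHom_Icc _ _) 1
    (fun q => (ha.norm_aeval_le_norm_toContinuousMapOn q).trans_eq (one_mul _).symm) f).trans_eq
    (one_mul _)

end functionalCalculus

end NormedAlgebra

section Intertwining

open Polynomial

variable {E F : Type*} [NormedAddCommGroup E] [NormedSpace ℂ E]
  [NormedAddCommGroup F] [NormedSpace ℂ F] {T : E →L[ℂ] E} {S : F →L[ℂ] F} {π : E →L[ℂ] F}

theorem map_aeval_of_intertwines (hπ : ∀ z, π (T z) = S (π z)) (p : ℝ[X]) (z : E) :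
    π (aeval T p z) = aeval S p (π z) := by
  induction p using Polynomial.induction_on' generalizing z with
  | add p q hp hq => simp [hp, hq]
  | monomial n r =>
    have hiter : π (T^[n] z) = S^[n] (π z) :=
      Function.Semiconj.iterate_right (f := π) hπ n z
    simp [aeval_monomial, Algebra.algebraMap_eq_smul_one, hiter]

variable [CompleteSpace E]

theorem map_functionalCalculus_eq_zero (hT : IsCStarHermitian T) (hS : IsCStarHermitian S)
    (hπ : ∀ z, π (T z) = S (π z)) (hST : ‖S‖ ≤ ‖T‖) {f : C(Set.Icc (-‖T‖) ‖T‖, ℝ)}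
    (hf : ∀ r : Set.Icc (-‖T‖) ‖T‖, |(r : ℝ)| ≤ ‖S‖ → f r = 0) (z : E) :
    π (functionalCalculus T f z) = 0 := by
  let restr : C(Set.Icc (-‖S‖) ‖S‖, Set.Icc (-‖T‖) ‖T‖) :=
    ⟨Set.inclusion (Set.Icc_subset_Icc (neg_le_neg hST) hST), continuous_inclusion _⟩
  have bound (g : C(Set.Icc (-‖T‖) ‖T‖, ℝ)) :
      ‖π (functionalCalculus T g z)‖ ≤ ‖g.comp restr‖ * ‖π z‖ := by
    induction g using (denseRange_toContinuousMapOnAlgHom_Icc (-‖T‖) ‖T‖).induction_on with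
    | hp => exact isClosed_le (by fun_prop) (by fun_prop)
    | ih p =>
      calc ‖π (functionalCalculus T (p.toContinuousMapOn _) z)‖
        _ = ‖aeval S p (π z)‖ := by
          rw [functionalCalculus_toContinuousMapOn hT, map_aeval_of_intertwines hπ]
        _ ≤ ‖aeval S p‖ * ‖π z‖ := ContinuousLinearMap.le_opNorm _ _
        _ ≤ ‖(p.toContinuousMapOn _).comp restr‖ * ‖π z‖ := by
          gcongr
          exact hS.norm_aeval_le_norm_toContinuousMapOn p
  have hzero : f.comp restr = 0 := ContinuousMap.ext fun r => hf _ (abs_le.2 r.2)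
  simpa [hzero] using bound f

-- If `f` is the difference between `r` and its truncation to `[-‖S‖, ‖S‖]`, then `f(S) = 0`, so
-- `π ∘ f(T) = 0` and `T` equals its own truncation.
theorem opNorm_le_opNorm_of_injective_of_intertwines (hT : IsCStarHermitian T)
    (hS : IsCStarHermitian S) (hπ : ∀ z, π (T z) = S (π z)) (hinj : Function.Injective π) :
    ‖T‖ ≤ ‖S‖ := by
  rcases le_total ‖T‖ ‖S‖ with h | hST
  · exact h
  let trunc : C(Set.Icc (-‖T‖) ‖T‖, ℝ) :=
    ⟨fun r => max (-‖S‖) (min r ‖S‖), by fun_prop⟩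
  have hX : functionalCalculus T (X.toContinuousMapOn _) = T := by
    simpa using functionalCalculus_toContinuousMapOn hT X
  have hzero : functionalCalculus T (X.toContinuousMapOn _ - trunc) = 0 := by
    ext z
    refine hinj ((map_functionalCalculus_eq_zero hT hS hπ hST (fun r hr => ?_) z).trans
      (map_zero π).symm)
    simp [trunc, (abs_le.1 hr).1, (abs_le.1 hr).2]
  calc ‖T‖ = ‖functionalCalculus T trunc‖ := by
        rw [map_sub, hX, sub_eq_zero] at hzero
        rw [← hzero]
    _ ≤ ‖trunc‖ := norm_functionalCalculus_le hT trunc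
    _ ≤ ‖S‖ := (ContinuousMap.norm_le _ (norm_nonneg S)).2 fun r => abs_le.2
        ⟨le_max_left _ _, max_le (neg_le_self (norm_nonneg S)) (min_le_right _ _)⟩

end Intertwining

section TernaryAdjoint

open Polynomial

/-- `T'` is an adjoint of the operator `T` for the ternary product `μ`.  This is the only half of
adjointness that the C⋆-inequality `‖T‖ ^ 2 ≤ ‖T' * T‖` needs. -/
def IsTernaryAdjoint {E : Type*} (μ : E → E → E → E) (T T' : E → E) : Prop :=
  ∀ x y z, μ x (T y) z = μ x y (T' z)

variable {E : Type*} [NormedAddCommGroup E] [NormedSpace ℂ E] {μ : E → E → E → E}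
  {T T' : E →L[ℂ] E}

theorem IsTernaryAdjoint.aeval (h : IsTernaryProduct μ) (hT : IsTernaryAdjoint μ T T')
    (p : ℂ[X]) : IsTernaryAdjoint μ (aeval T p) (aeval T' (p.map (starRingEnd ℂ))) := by
  obtain ⟨-, -, add_mid, smul_mid, add_right, smul_right, -, -⟩ := h
  intro x y z
  induction p using Polynomial.induction_on' with
  | add p q hp hq => simp [add_mid, add_right, hp, hq]
  | monomial n c =>
    have hpow (z : E) : μ x (T^[n] y) z = μ x y (T'^[n] z) := by
      induction n generalizing z with
      | zero => rfl
      | succ n ih => rw [Function.iterate_succ_apply', hT, ih, Function.iterate_succ_apply]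
    simp [aeval_monomial, Algebra.algebraMap_eq_smul_one, smul_mid, smul_right, hpow]

theorem IsTernaryAdjoint.norm_sq_le (hn : IsCStarTringNorm μ) (hT : IsTernaryAdjoint μ T T') :
    ‖T‖ ^ 2 ≤ ‖T' * T‖ := by
  rw [← Real.le_sqrt (norm_nonneg T) (norm_nonneg _)]
  refine T.opNorm_le_bound (Real.sqrt_nonneg _) fun x => ?_
  have hcube : ‖T x‖ ^ 2 * ‖T x‖ ≤ ‖T' * T‖ * ‖x‖ ^ 2 * ‖T x‖ :=
    calc ‖T x‖ ^ 2 * ‖T x‖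
      _ = ‖μ (T x) x ((T' * T) x)‖ := by rw [← pow_succ, ← hn.2, hT]; rfl
      _ ≤ ‖T x‖ * ‖x‖ * ‖(T' * T) x‖ := hn.1 _ _ _
      _ ≤ ‖T x‖ * ‖x‖ * (‖T' * T‖ * ‖x‖) := by
        gcongr
        exact (T' * T).le_opNorm x
      _ = ‖T' * T‖ * ‖x‖ ^ 2 * ‖T x‖ := by ring
  rcases (norm_nonneg (T x)).eq_or_lt with hzero | hpos
  · rw [← hzero]
    positivity
  · rw [← Real.sqrt_sq (norm_nonneg x), ← Real.sqrt_mul (norm_nonneg _)]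
    exact Real.le_sqrt_of_sq_le (le_of_mul_le_mul_right hcube hpos)

theorem IsTernaryAdjoint.isCStarHermitian (h : IsTernaryProduct μ) (hn : IsCStarTringNorm μ)
    (hT : IsTernaryAdjoint μ T T) : IsCStarHermitian T := fun p => by
  rw [map_mul]
  exact (hT.aeval h p).norm_sq_le hn

end TernaryAdjoint

section LeftMul

variable {E : Type*} [NormedAddCommGroup E] [NormedSpace ℂ E] {μ : E → E → E → E}
  (h : IsTernaryProduct μ) (hn : IsCStarTringNorm μ)

/-- The operator `z ↦ μ a b z` of left multiplication by `ab⋆`. -/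
def leftMul (a b : E) : E →L[ℂ] E :=
  LinearMap.mkContinuous
    { toFun := μ a b
      map_add' := h.2.2.2.2.1 a b
      map_smul' := fun c => h.2.2.2.2.2.1 c a b }
    (‖a‖ * ‖b‖) (hn.1 a b)

@[simp]
theorem leftMul_apply (a b z : E) : leftMul h hn a b z = μ a b z := rfl

theorem norm_leftMul_self (a : E) : ‖leftMul h hn a a‖ = ‖a‖ ^ 2 := by
  refine le_antisymm ?_ ?_
  · rw [sq]
    exact LinearMap.mkContinuous_norm_le _ (by positivity) _
  · rcases (norm_nonneg a).eq_or_lt with hzero | hpos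
    · simp [← hzero]
    · refine le_of_mul_le_mul_right ?_ hpos
      rw [← pow_succ, ← hn.2]
      exact (leftMul h hn a a).le_opNorm a

theorem isCStarHermitian_leftMul_self (a : E) : IsCStarHermitian (leftMul h hn a a) :=
  IsTernaryAdjoint.isCStarHermitian h hn fun x y z => h.2.2.2.2.2.2.2 x y a a z

theorem exists_smul_eq_add_of_norm_sq_lt [CompleteSpace E] (h : IsTernaryProduct μ)
    (hn : IsCStarTringNorm μ) (a : E) {k : ℂ} (hk : ‖a‖ ^ 2 < ‖k‖) : ∃ b, k • b = a + μ a a b := by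
  have hres : k ∉ spectrum ℂ (leftMul h hn a a) := fun hmem =>
    hk.not_ge ((norm_le_norm_of_mem_spectrum ContinuousLinearMap.norm_id_le hmem).trans_eq
      (norm_leftMul_self h hn a))
  obtain ⟨R, hR, -⟩ := isUnit_iff_exists.1 (spectrum.notMem_iff.1 hres)
  refine ⟨R a, sub_eq_iff_eq_add.1 ?_⟩
  simpa [Algebra.algebraMap_eq_smul_one] using DFunLike.congr_fun hR a

theorem notMem_spectrum_leftMul_self {a b c : E} {k : ℂ} (hk : k ≠ 0)
    (hb : k • b = a + μ a a b) (hc : conj k • c = a + μ a a c) :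
    k ∉ spectrum ℂ (leftMul h hn a a) := by
  obtain ⟨add_left, smul_left, add_mid, smul_mid, -, -, assoc_left, assoc_mid⟩ := id h
  refine notMem_spectrum_of_quasiInverse (b := leftMul h hn b a) (c := leftMul h hn a c) hk
    ?_ ?_
  · ext z
    simp [← smul_left, hb, add_left, assoc_left, assoc_mid]
  · ext z
    have hmid : k • μ a c z = μ a (conj k • c) z := by rw [smul_mid, Complex.conj_conj]
    simp [hmid, hc, add_mid, assoc_mid]

end LeftMul

section Homomorphism

variable {E F : Type*} [NormedAddCommGroup E] [NormedSpace ℂ E] [CompleteSpace E]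
  [NormedAddCommGroup F] [NormedSpace ℂ F] {μE : E → E → E → E} {μF : F → F → F → F}

theorem norm_map_le_of_ternaryHom (hE : IsTernaryProduct μE) (hF : IsTernaryProduct μF)
    (hnE : IsCStarTringNorm μE) (hnF : IsCStarTringNorm μF) (π : E →ₗ[ℂ] F)
    (hπ : ∀ x y z, π (μE x y z) = μF (π x) (π y) (π z)) (x : E) : ‖π x‖ ≤ ‖x‖ := by
  have map_solution {k : ℂ} (hk : ‖x‖ ^ 2 < ‖k‖) : ∃ b, k • b = π x + μF (π x) (π x) b := by
    obtain ⟨y, hy⟩ := exists_smul_eq_add_of_norm_sq_lt hE hnE x hk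
    exact ⟨π y, by rw [← map_smul, hy, map_add, hπ]⟩
  have hL : ‖leftMul hF hnF (π x) (π x)‖ ≤ ‖x‖ ^ 2 := by
    refine (isCStarHermitian_leftMul_self hF hnF _).norm_le_of_forall_mem_spectrum
      (sq_nonneg _) fun k hk => not_lt.1 fun hlt => ?_
    obtain ⟨b, hb⟩ := map_solution hlt
    obtain ⟨c, hc⟩ := map_solution (k := conj k) (by rwa [Complex.norm_conj])
    exact notMem_spectrum_leftMul_self hF hnF
      (norm_pos_iff.1 ((sq_nonneg _).trans_lt hlt)) hb hc hk
  rw [norm_leftMul_self] at hL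
  exact le_of_sq_le_sq hL (norm_nonneg x)

theorem norm_le_norm_map_of_injective_ternaryHom (hE : IsTernaryProduct μE)
    (hF : IsTernaryProduct μF) (hnE : IsCStarTringNorm μE) (hnF : IsCStarTringNorm μF)
    (π : E →ₗ[ℂ] F) (hπ : ∀ x y z, π (μE x y z) = μF (π x) (π y) (π z))
    (hinj : Function.Injective π) (x : E) : ‖x‖ ≤ ‖π x‖ := by
  let πL : E →L[ℂ] F := π.mkContinuous 1 fun z => by
    simpa using norm_map_le_of_ternaryHom hE hF hnE hnF π hπ z
  have hL : ‖leftMul hE hnE x x‖ ≤ ‖leftMul hF hnF (π x) (π x)‖ :=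
    opNorm_le_opNorm_of_injective_of_intertwines (π := πL)
      (isCStarHermitian_leftMul_self hE hnE x) (isCStarHermitian_leftMul_self hF hnF (π x))
      (hπ x x) hinj
  rw [norm_leftMul_self, norm_leftMul_self] at hL
  exact le_of_sq_le_sq hL (norm_nonneg _)

end Homomorphism

theorem stmt_15_general {E F : Type*}
    [NormedAddCommGroup E] [NormedSpace ℂ E] [CompleteSpace E]
    [NormedAddCommGroup F] [NormedSpace ℂ F]
    (μE : E → E → E → E) (μF : F → F → F → F)
    (hE : IsTernaryProduct μE) (hF : IsTernaryProduct μF)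
    (hnE : IsCStarTringNorm μE) (hnF : IsCStarTringNorm μF)
    (π : E →ₗ[ℂ] F)
    (hπ : ∀ x y z : E, π (μE x y z) = μF (π x) (π y) (π z)) :
    (∀ x : E, ‖π x‖ ≤ ‖x‖) ∧
    ((∀ x : E, ‖π x‖ = ‖x‖) ↔ Function.Injective π) := by
  have contractive := norm_map_le_of_ternaryHom hE hF hnE hnF π hπ
  refine ⟨contractive, fun hiso => (AddMonoidHomClass.isometry_of_norm π hiso).injective,
    fun hinj x => (contractive x).antisymm ?_⟩
  exact norm_le_norm_map_of_injective_ternaryHom hE hF hnE hnF π hπ hinj x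

/-- Let `E` and `F` be `C*`-ternary rings and `π : E → F` a
homomorphism of the underlying `*`-trings.  Then `π` is contractive, and `π` is
isometric iff it is injective. -/
theorem stmt_15 {E F : Type*}
    [NormedAddCommGroup E] [NormedSpace ℂ E] [CompleteSpace E]
    [NormedAddCommGroup F] [NormedSpace ℂ F] [CompleteSpace F]
    (μE : E → E → E → E) (μF : F → F → F → F)
    (hE : IsTernaryProduct μE) (hF : IsTernaryProduct μF)
    (hnE : IsCStarTringNorm μE) (hnF : IsCStarTringNorm μF)
    (π : E →ₗ[ℂ] F)
    (hπ : ∀ x y z : E, π (μE x y z) = μF (π x) (π y) (π z)) :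
    (∀ x : E, ‖π x‖ ≤ ‖x‖) ∧
    ((∀ x : E, ‖π x‖ = ‖x‖) ↔ Function.Injective π) :=
  stmt_15_general μE μF hE hF hnE hnF π hπ
end
end

section
/- Let E be a *-tring and F₁, F₂ ideals of E such that E = F₁ ⊕ F₂ (internal direct sum of subspaces). Let γ be a C*-seminorm on E. If x = y + z with y ∈ F₁ and z ∈ F₂, then γ(x) = max{γ(y), γ(z)}. -/
noncomputable section

open scoped ComplexConjugate

/-!
The cube map `x ↦ μ x x x` is additive across two ideals meeting trivially, since every product with
arguments in both ideals vanishes. A `C*`-seminorm turns the `n`-th iterate of the cube map into the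
power `3 ^ n`, so `γ (y + z) ^ 3 ^ n ≤ γ y ^ 3 ^ n + γ z ^ 3 ^ n` for all `n`; letting `n → ∞` gives
`γ (y + z) ≤ max (γ y) (γ z)`. Conversely `μ (y + z) y y = μ y y y`, whence
`γ y ^ 3 ≤ γ (y + z) * γ y ^ 2`.
-/

open Filter

theorem le_max_of_frequently_pow_le_pow_add_pow {a b c : ℝ} (ha : 0 ≤ a) (hb : 0 ≤ b)
    (h : ∃ᶠ n : ℕ in atTop, c ^ n ≤ a ^ n + b ^ n) : c ≤ max a b := by
  by_contra! hlt
  obtain ⟨hac, hbc⟩ := max_lt_iff.mp hlt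
  have hc : 0 < c := ha.trans_lt hac
  have hsmall : (fun n : ℕ => a ^ n + b ^ n) =o[atTop] fun n => c ^ n :=
    (isLittleO_pow_pow_of_lt_left ha hac).add (isLittleO_pow_pow_of_lt_left hb hbc)
  obtain ⟨n, hle, hhalf⟩ := (h.and_eventually (hsmall.bound one_half_pos)).exists
  rw [Real.norm_of_nonneg (by positivity), Real.norm_of_nonneg (by positivity)] at hhalf
  linarith [pow_pos hc n]

section TriadditiveMap

variable {E : Type*} [AddCommGroup E]

/-- The cube `T x x x` of `x` with respect to a triadditive product `T`. -/
def ternaryCube (T : E →+ E →+ E →+ E) (x : E) : E := T x x x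

/-- `F` is an ideal for the triadditive product `T`: a product lies in `F` as soon as one of its
three arguments does. -/
structure IsTernaryIdeal (T : E →+ E →+ E →+ E) (F : AddSubgroup E) : Prop where
  apply_mem_of_left_mem {x : E} (hx : x ∈ F) (y z : E) : T x y z ∈ F
  apply_mem_of_middle_mem (x : E) {y : E} (hy : y ∈ F) (z : E) : T x y z ∈ F
  apply_mem_of_right_mem (x y : E) {z : E} (hz : z ∈ F) : T x y z ∈ F

/-- The `C*`-conditions on a seminorm `γ` with respect to a triadditive product `T`, where
homogeneity of `γ` is reduced to `γ (-x) = γ x` so that no scalars are needed. -/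
structure IsTernaryCStarSeminorm (T : E →+ E →+ E →+ E) (γ : AddGroupSeminorm E) : Prop where
  apply_le (x y z : E) : γ (T x y z) ≤ γ x * γ y * γ z
  apply_self (x : E) : γ (T x x x) = γ x ^ 3

variable {T : E →+ E →+ E →+ E} {γ : AddGroupSeminorm E} {F F₁ F₂ : AddSubgroup E} {y z : E}

namespace IsTernaryIdeal

theorem iterate_ternaryCube_mem (h : IsTernaryIdeal T F) (hy : y ∈ F) (n : ℕ) :
    (ternaryCube T)^[n] y ∈ F :=
  Set.MapsTo.iterate (s := (F : Set E)) (fun _ hx => h.apply_mem_of_left_mem hx _ _) n hy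

theorem apply_eq_zero_of_left_middle (h₁ : IsTernaryIdeal T F₁) (h₂ : IsTernaryIdeal T F₂)
    (hF : Disjoint F₁ F₂) (hy : y ∈ F₁) (hz : z ∈ F₂) (w : E) : T y z w = 0 :=
  AddSubgroup.disjoint_def.mp hF (h₁.apply_mem_of_left_mem hy z w)
    (h₂.apply_mem_of_middle_mem y hz w)

theorem apply_eq_zero_of_left_right (h₁ : IsTernaryIdeal T F₁) (h₂ : IsTernaryIdeal T F₂)
    (hF : Disjoint F₁ F₂) (hy : y ∈ F₁) (w : E) (hz : z ∈ F₂) : T y w z = 0 :=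
  AddSubgroup.disjoint_def.mp hF (h₁.apply_mem_of_left_mem hy w z)
    (h₂.apply_mem_of_right_mem y w hz)

theorem ternaryCube_add (h₁ : IsTernaryIdeal T F₁) (h₂ : IsTernaryIdeal T F₂)
    (hF : Disjoint F₁ F₂) (hy : y ∈ F₁) (hz : z ∈ F₂) :
    ternaryCube T (y + z) = ternaryCube T y + ternaryCube T z := by
  have hyz := apply_eq_zero_of_left_middle h₁ h₂ hF hy hz
  have hzy := apply_eq_zero_of_left_middle h₂ h₁ hF.symm hz hy
  have hyyz := apply_eq_zero_of_left_right h₁ h₂ hF hy y hz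
  have hzzy := apply_eq_zero_of_left_right h₂ h₁ hF.symm hz z hy
  simp only [ternaryCube, map_add, AddMonoidHom.add_apply, hyz, hzy, hyyz, hzzy, add_zero, zero_add]

theorem iterate_ternaryCube_add (h₁ : IsTernaryIdeal T F₁) (h₂ : IsTernaryIdeal T F₂)
    (hF : Disjoint F₁ F₂) (hy : y ∈ F₁) (hz : z ∈ F₂) (n : ℕ) :
    (ternaryCube T)^[n] (y + z) = (ternaryCube T)^[n] y + (ternaryCube T)^[n] z := by
  induction n with
  | zero => rfl
  | succ n ih =>
    simp only [Function.iterate_succ_apply', ih]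
    exact ternaryCube_add h₁ h₂ hF (h₁.iterate_ternaryCube_mem hy n)
      (h₂.iterate_ternaryCube_mem hz n)

end IsTernaryIdeal

namespace IsTernaryCStarSeminorm

theorem map_iterate_ternaryCube (hγ : IsTernaryCStarSeminorm T γ) (x : E) (n : ℕ) :
    γ ((ternaryCube T)^[n] x) = γ x ^ 3 ^ n := by
  induction n with
  | zero => simp
  | succ n ih =>
    rw [Function.iterate_succ_apply', ternaryCube, hγ.apply_self, ih, ← pow_mul, ← pow_succ]

theorem map_add_pow_le (hγ : IsTernaryCStarSeminorm T γ) (h₁ : IsTernaryIdeal T F₁)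
    (h₂ : IsTernaryIdeal T F₂) (hF : Disjoint F₁ F₂) (hy : y ∈ F₁) (hz : z ∈ F₂) (n : ℕ) :
    γ (y + z) ^ 3 ^ n ≤ γ y ^ 3 ^ n + γ z ^ 3 ^ n := by
  simp only [← hγ.map_iterate_ternaryCube, h₁.iterate_ternaryCube_add h₂ hF hy hz]
  exact map_add_le_add γ _ _

theorem map_add_le_max (hγ : IsTernaryCStarSeminorm T γ) (h₁ : IsTernaryIdeal T F₁)
    (h₂ : IsTernaryIdeal T F₂) (hF : Disjoint F₁ F₂) (hy : y ∈ F₁) (hz : z ∈ F₂) :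
    γ (y + z) ≤ max (γ y) (γ z) :=
  le_max_of_frequently_pow_le_pow_add_pow (apply_nonneg γ y) (apply_nonneg γ z) <|
    (tendsto_pow_atTop_atTop_of_one_lt (by norm_num : 1 < 3)).frequently <|
      Frequently.of_forall (hγ.map_add_pow_le h₁ h₂ hF hy hz)

theorem le_of_apply_eq (hγ : IsTernaryCStarSeminorm T γ) {x : E} (h : T x y y = T y y y) :
    γ y ≤ γ x := by
  obtain hy | hy := (apply_nonneg γ y).eq_or_lt
  · exact hy.symm.trans_le (apply_nonneg γ x)
  refine le_of_mul_le_mul_right ?_ (pow_pos hy 2)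
  calc
    γ y * γ y ^ 2 = γ (T x y y) := by rw [h, hγ.apply_self]; ring
    _ ≤ γ x * γ y * γ y := hγ.apply_le x y y
    _ = γ x * γ y ^ 2 := by ring

theorem le_map_add (hγ : IsTernaryCStarSeminorm T γ) (h₁ : IsTernaryIdeal T F₁)
    (h₂ : IsTernaryIdeal T F₂) (hF : Disjoint F₁ F₂) (hy : y ∈ F₁) (hz : z ∈ F₂) :
    γ y ≤ γ (y + z) := by
  apply hγ.le_of_apply_eq
  rw [map_add, AddMonoidHom.add_apply, AddMonoidHom.add_apply,
    h₂.apply_eq_zero_of_left_middle h₁ hF.symm hz hy, add_zero]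

end IsTernaryCStarSeminorm

theorem stmt_17_general (hγ : IsTernaryCStarSeminorm T γ) (h₁ : IsTernaryIdeal T F₁)
    (h₂ : IsTernaryIdeal T F₂) (hF : Disjoint F₁ F₂) (hy : y ∈ F₁) (hz : z ∈ F₂) :
    γ (y + z) = max (γ y) (γ z) := by
  refine (hγ.map_add_le_max h₁ h₂ hF hy hz).antisymm (max_le (hγ.le_map_add h₁ h₂ hF hy hz) ?_)
  rw [add_comm]
  exact hγ.le_map_add h₂ h₁ hF.symm hz hy

end TriadditiveMap

section Tring

variable {E : Type*} [AddCommGroup E] [Module ℂ E] {μ : E → E → E → E} {γ : E → ℝ}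

/-- A ternary product as a bundled triadditive map; conjugate-linearity in the middle variable is
kept only as additivity. -/
def IsTernaryProduct.toAddMonoidHom (h : IsTernaryProduct μ) : E →+ E →+ E →+ E :=
  AddMonoidHom.mk' (fun x => AddMonoidHom.mk' (fun y => AddMonoidHom.mk' (μ x y) (h.2.2.2.2.1 x y))
    fun y y' => AddMonoidHom.ext (h.2.2.1 x y y'))
    fun x x' => AddMonoidHom.ext fun y => AddMonoidHom.ext (h.1 x x' y)

/-- A `C*`-seminorm on a tring as a bundled seminorm on the additive group. -/
def IsCStarSeminormTring.toAddGroupSeminorm (hγ : IsCStarSeminormTring μ γ) :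
    AddGroupSeminorm E where
  toFun := γ
  map_zero' := by simpa using hγ.2.1 0 0
  add_le' := hγ.1
  neg' x := by simpa using hγ.2.1 (-1) x

theorem IsTernaryProduct.isTernaryIdeal (h : IsTernaryProduct μ) {F : Submodule ℂ E}
    (hF : ∀ x y z : E,
      (x ∈ F → μ x y z ∈ F) ∧ (y ∈ F → μ x y z ∈ F) ∧ (z ∈ F → μ x y z ∈ F)) :
    IsTernaryIdeal h.toAddMonoidHom F.toAddSubgroup where
  apply_mem_of_left_mem hx y z := (hF _ y z).1 hx
  apply_mem_of_middle_mem x _ hy z := (hF x _ z).2.1 hy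
  apply_mem_of_right_mem x y _ hz := (hF x y _).2.2 hz

theorem IsCStarSeminormTring.isTernaryCStarSeminorm (hγ : IsCStarSeminormTring μ γ)
    (h : IsTernaryProduct μ) :
    IsTernaryCStarSeminorm h.toAddMonoidHom hγ.toAddGroupSeminorm where
  apply_le := hγ.2.2.1
  apply_self := hγ.2.2.2

end Tring

/-- Let `E` be a `*`-tring and `F₁, F₂` ideals of `E` with
`E = F₁ ⊕ F₂` (internal direct sum of subspaces).  If `γ` is a `C*`-seminorm on
`E` and `x = y + z` with `y ∈ F₁`, `z ∈ F₂`, then `γ(x) = max(γ(y), γ(z))`. -/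
theorem stmt_17 {E : Type*} [AddCommGroup E] [Module ℂ E]
    (μ : E → E → E → E) (h : IsTernaryProduct μ)
    (F₁ F₂ : Submodule ℂ E)
    (h₁ : ∀ x y z : E,
      (x ∈ F₁ → μ x y z ∈ F₁) ∧ (y ∈ F₁ → μ x y z ∈ F₁) ∧ (z ∈ F₁ → μ x y z ∈ F₁))
    (h₂ : ∀ x y z : E,
      (x ∈ F₂ → μ x y z ∈ F₂) ∧ (y ∈ F₂ → μ x y z ∈ F₂) ∧ (z ∈ F₂ → μ x y z ∈ F₂))
    (hsup : F₁ ⊔ F₂ = ⊤) (hinf : F₁ ⊓ F₂ = ⊥)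
    (γ : E → ℝ) (hγ : IsCStarSeminormTring μ γ) :
    ∀ y ∈ F₁, ∀ z ∈ F₂, γ (y + z) = max (γ y) (γ z) := by
  intro y hy z hz
  exact stmt_17_general (hγ.isTernaryCStarSeminorm h) (h.isTernaryIdeal h₁) (h.isTernaryIdeal h₂)
    (AddSubgroup.disjoint_def.mpr (Submodule.disjoint_def.mp (disjoint_iff.mpr hinf) _)) hy hz
end
end

section
/- Let (E, A, ⟨·,·⟩) be a full C*-basic triple. For a closed subspace F of E let F^r denote the closure in A of span{⟨x,y⟩ : x,y ∈ F}, and for a closed subset B of A let EB denote the closure in E of span{xb : x ∈ E, b ∈ B}. Then the map F ↦ F^r is an inclusion-preserving bijection from the set of left ideals of E (closed subspaces F with μ(E,E,F) ⊆ F) onto the set of hereditary C*-subalgebras of A, with inverse B ↦ EB; moreover this map restricts to an inclusion-preserving bijection from the set of two-sided ideals of E onto the set of closed two-sided ideals of A. -/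
noncomputable section

open scoped ComplexConjugate

variable {E A : Type*} [AddCommGroup E] [Module ℂ E]
    [NonUnitalRing A] [Module ℂ A] [StarRing A]

section Statement19

variable {E' A' : Type*} [NormedAddCommGroup E'] [NormedSpace ℂ E']
    [NonUnitalNormedRing A'] [NormedSpace ℂ A'] [StarRing A'] [CStarRing A']

/-- `Fʳ`: the closure in `A` of `span{⟪x,y⟫ : x, y ∈ F}`. -/
def rOf (t : CStarBasicTriple E' A') (F : Set E') : Set A' :=
  closure ((Submodule.span ℂ
    {a : A' | ∃ x ∈ F, ∃ y ∈ F, t.inner x y = a} : Submodule ℂ A') : Set A')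

/-- `EB`: the closure in `E` of `span{xb : x ∈ E, b ∈ B}`. -/
def modOf (t : CStarBasicTriple E' A') (B : Set A') : Set E' :=
  closure ((Submodule.span ℂ
    {x : E' | ∃ y : E', ∃ b ∈ B, t.act y b = x} : Submodule ℂ E') : Set E')

/-- `F` is a left ideal of the `C*`-tring `E`: a closed subspace with
`μ(E,E,F) ⊆ F`. -/
def IsLeftIdealTring (t : CStarBasicTriple E' A') (F : Set E') : Prop :=
  IsClosed F ∧ (0 : E') ∈ F ∧ (∀ x ∈ F, ∀ y ∈ F, x + y ∈ F) ∧
    (∀ (c : ℂ), ∀ x ∈ F, c • x ∈ F) ∧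
    ∀ (x y : E'), ∀ z ∈ F, t.act x (t.inner y z) ∈ F

/-- `F` is a two-sided ideal of the `C*`-tring `E`: a left ideal which also
satisfies `μ(F,E,E) ⊆ F`. -/
def IsIdealTring (t : CStarBasicTriple E' A') (F : Set E') : Prop :=
  IsLeftIdealTring t F ∧ ∀ x ∈ F, ∀ y z : E', t.act x (t.inner y z) ∈ F

/-- `B` is a hereditary `C*`-subalgebra of `A`: a closed `*`-subalgebra with
`BAB ⊆ B`. -/
def IsHereditarySubalg (B : Set A') : Prop :=
  IsClosed B ∧ (0 : A') ∈ B ∧ (∀ a ∈ B, ∀ b ∈ B, a + b ∈ B) ∧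
    (∀ (c : ℂ), ∀ a ∈ B, c • a ∈ B) ∧ (∀ a ∈ B, ∀ b ∈ B, a * b ∈ B) ∧
    (∀ a ∈ B, star a ∈ B) ∧ ∀ a ∈ B, ∀ c : A', ∀ b ∈ B, a * c * b ∈ B

/-- `B` is a closed two-sided ideal of `A`. -/
def IsClosedTwoSidedIdealAlg (B : Set A') : Prop :=
  IsClosed B ∧ (0 : A') ∈ B ∧ (∀ a ∈ B, ∀ b ∈ B, a + b ∈ B) ∧
    (∀ (c : ℂ), ∀ a ∈ B, c • a ∈ B) ∧
    ∀ (a : A'), ∀ b ∈ B, a * b ∈ B ∧ b * a ∈ B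

/-!
If `F` is a left ideal then `E Fʳ ⊆ F`, and this makes `Fʳ` hereditary. Both `F ⊆ E Fʳ` and
`B ⊆ (EB)ʳ` come from a self-adjoint contractive approximate unit `(p)` of the `C*`-subalgebra at
hand. For `z ∈ F`, put `w = z p - z` and `d = ⟪z, z⟫ p - ⟪z, z⟫`; then `⟪w, w⟫ = p d - d`, so the
ternary `C*`-identity `‖w‖³ = ‖w⟪w, w⟫‖` forces `z p → z`. For `b ∈ B`, fullness gives
`B A B ⊆ (EB)ʳ`, and `b` is an iterated limit of elements `q b p` with `p, q ∈ B`. Closed two-sided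
ideals of `A` are hereditary because the same estimate, now with the `C*`-identity, makes them
self-adjoint.
-/

open Filter Topology

theorem map_mem_of_mem_closure_span {R S V W : Type*} [Semiring R] [Semiring S] {σ : R →+* S}
    [TopologicalSpace V] [AddCommMonoid V] [Module R V]
    [TopologicalSpace W] [AddCommMonoid W] [Module S W] (f : V →SL[σ] W) {s : Set V}
    {K : Submodule S W} (hK : IsClosed (K : Set W)) (h : ∀ x ∈ s, f x ∈ K) {x : V}
    (hx : x ∈ closure (Submodule.span R s : Set V)) : f x ∈ K :=
  closure_minimal (t := f ⁻¹' K) (Submodule.span_le (p := K.comap f.toLinearMap).2 h)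
    (hK.preimage f.continuous) hx

theorem tendsto_of_norm_sub_pow_le {ι V : Type*} [SeminormedAddCommGroup V] {l : Filter ι}
    {f : ι → V} {x : V} {g : ι → ℝ} {n : ℕ} (hn : n ≠ 0) (h : ∀ᶠ i in l, ‖f i - x‖ ^ n ≤ g i)
    (hg : Tendsto g l (𝓝 0)) : Tendsto f l (𝓝 x) := by
  have hpow : Tendsto (fun i => ‖f i - x‖ ^ n) l (𝓝 0) :=
    squeeze_zero' (.of_forall fun _ => by positivity) h hg
  have hroot : (fun i => ‖f i - x‖) =o[l] (fun _ => (1 : ℝ)) :=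
    .of_pow (by simpa only [Pi.pow_def, one_pow] using (Asymptotics.isLittleO_one_iff ℝ).2 hpow) hn
  exact tendsto_iff_norm_sub_tendsto_zero.2 ((Asymptotics.isLittleO_one_iff ℝ).1 hroot)

section CStarAlgebra

theorem norm_mul_sub_self_le {C : Type*} [NonUnitalSeminormedRing C] {p : C} (hp : ‖p‖ ≤ 1)
    (d : C) : ‖p * d - d‖ ≤ 2 * ‖d‖ :=
  calc ‖p * d - d‖ ≤ ‖p‖ * ‖d‖ + ‖d‖ := (norm_sub_le _ _).trans (by gcongr; exact norm_mul_le _ _)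
    _ ≤ 1 * ‖d‖ + ‖d‖ := by gcongr
    _ = 2 * ‖d‖ := by ring

variable {C : Type*} [NonUnitalNormedRing C] [StarRing C] [CStarRing C]

theorem norm_mul_sub_self_sq_le {p : C} (hsa : IsSelfAdjoint p) (hp : ‖p‖ ≤ 1) (b : C) :
    ‖b * p - b‖ ^ 2 ≤ 2 * ‖star b * b * p - star b * b‖ := by
  have hstar : star (b * p - b) * (b * p - b)
      = p * (star b * b * p - star b * b) - (star b * b * p - star b * b) := by
    rw [star_sub, star_mul, hsa.star_eq]
    noncomm_ring
  rw [sq, ← CStarRing.norm_star_mul_self, hstar]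
  exact norm_mul_sub_self_le hp _

theorem tendsto_mul_of_tendsto_star_mul_self_mul {ι : Type*} {l : Filter ι} {p : ι → C} {b : C}
    (hp : ∀ᶠ i in l, IsSelfAdjoint (p i) ∧ ‖p i‖ ≤ 1)
    (h : Tendsto (fun i => star b * b * p i) l (𝓝 (star b * b))) :
    Tendsto (fun i => b * p i) l (𝓝 b) :=
  tendsto_of_norm_sub_pow_le two_ne_zero
    (hp.mono fun i hi => norm_mul_sub_self_sq_le hi.1 hi.2 b)
    (by simpa only [mul_zero] using (tendsto_iff_norm_sub_tendsto_zero.1 h).const_mul 2)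

variable [NormedSpace ℂ C] [CompleteSpace C] [StarModule ℂ C] [IsScalarTower ℂ C C]
  [SMulCommClass ℂ C C]

theorem exists_selfAdjoint_approximateUnit (S : NonUnitalStarSubalgebra ℂ C)
    (hS : IsClosed (S : Set C)) :
    ∃ l : Filter C, l.NeBot ∧ (∀ᶠ p in l, p ∈ S) ∧ (∀ᶠ p in l, IsSelfAdjoint p ∧ ‖p‖ ≤ 1) ∧
      ∀ a ∈ S, Tendsto (a * ·) l (𝓝 a) ∧ Tendsto (· * a) l (𝓝 a) := by
  let _ : NonUnitalCStarAlgebra C := {}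
  let _ : PartialOrder S := CStarAlgebra.spectralOrder S
  have : StarOrderedRing S := CStarAlgebra.spectralOrderedRing S
  have hunit := CStarAlgebra.increasingApproximateUnit S
  have hcoe (a : S) := continuous_subtype_val.tendsto a
  refine ⟨(CStarAlgebra.approximateUnit S).map (↑), inferInstance,
    eventually_map.2 (.of_forall Subtype.property), eventually_map.2 ?_, fun a ha => ⟨?_, ?_⟩⟩
  · filter_upwards [hunit.eventually_isSelfAdjoint, hunit.eventually_norm] with p hsa hp
    exact ⟨congrArg Subtype.val hsa, hp⟩
  · exact tendsto_map'_iff.2 ((hcoe _).comp (hunit.tendsto_mul_left ⟨a, ha⟩))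
  · exact tendsto_map'_iff.2 ((hcoe _).comp (hunit.tendsto_mul_right ⟨a, ha⟩))

end CStarAlgebra

namespace IsHereditarySubalg

variable {C : Type*} [NonUnitalNormedRing C] [NormedSpace ℂ C] [StarRing C] {B : Set C}

theorem mul_mem (hB : IsHereditarySubalg B) {b c : C} (hb : b ∈ B) (hc : c ∈ B) : b * c ∈ B :=
  hB.2.2.2.2.1 b hb c hc

theorem star_mem (hB : IsHereditarySubalg B) {b : C} (hb : b ∈ B) : star b ∈ B :=
  hB.2.2.2.2.2.1 b hb

theorem star_mul_mul_mem (hB : IsHereditarySubalg B) {b c : C} (hb : b ∈ B) (a : C)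
    (hc : c ∈ B) : star b * a * c ∈ B :=
  hB.2.2.2.2.2.2 _ (hB.star_mem hb) a c hc

/-- A hereditary `C*`-subalgebra as a bundled `*`-subalgebra. -/
def toNonUnitalStarSubalgebra (hB : IsHereditarySubalg B) : NonUnitalStarSubalgebra ℂ C where
  carrier := B
  zero_mem' := hB.2.1
  add_mem' ha hb := hB.2.2.1 _ ha _ hb
  smul_mem' c _ ha := hB.2.2.2.1 c _ ha
  mul_mem' := hB.mul_mem
  star_mem' := hB.star_mem

end IsHereditarySubalg

namespace IsClosedTwoSidedIdealAlg

variable {C : Type*} [NonUnitalNormedRing C] [NormedSpace ℂ C] {B : Set C}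

theorem mul_mem_left (hB : IsClosedTwoSidedIdealAlg B) (a : C) {b : C} (hb : b ∈ B) :
    a * b ∈ B :=
  (hB.2.2.2.2 a b hb).1

theorem mul_mem_right (hB : IsClosedTwoSidedIdealAlg B) (a : C) {b : C} (hb : b ∈ B) :
    b * a ∈ B :=
  (hB.2.2.2.2 a b hb).2

variable [StarRing C] [StarModule ℂ C]

/-- The largest self-adjoint part `B ∩ B*` of a closed two-sided ideal `B`. It is already a
`C*`-algebra before `B` is known to be self-adjoint, so it has an approximate unit. -/
def starCore (hB : IsClosedTwoSidedIdealAlg B) : NonUnitalStarSubalgebra ℂ C where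
  carrier := {b | b ∈ B ∧ star b ∈ B}
  zero_mem' := ⟨hB.2.1, (star_zero C).symm ▸ hB.2.1⟩
  add_mem' {a b} ha hb :=
    ⟨hB.2.2.1 _ ha.1 _ hb.1, (star_add a b).symm ▸ hB.2.2.1 _ ha.2 _ hb.2⟩
  smul_mem' c a ha :=
    ⟨hB.2.2.2.1 c _ ha.1, (star_smul c a).symm ▸ hB.2.2.2.1 (star c) _ ha.2⟩
  mul_mem' {a b} ha hb :=
    ⟨hB.mul_mem_left a hb.1, (star_mul a b).symm ▸ hB.mul_mem_left (star b) ha.2⟩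
  star_mem' {a} ha := ⟨ha.2, (star_star a).symm ▸ ha.1⟩

variable [CStarRing C]

theorem isClosed_starCore (hB : IsClosedTwoSidedIdealAlg B) : IsClosed (hB.starCore : Set C) :=
  hB.1.inter (hB.1.preimage continuous_star)

variable [CompleteSpace C] [IsScalarTower ℂ C C] [SMulCommClass ℂ C C]

theorem star_mem (hB : IsClosedTwoSidedIdealAlg B) {b : C} (hb : b ∈ B) : star b ∈ B := by
  obtain ⟨l, hl, hcore, hp, hunit⟩ :=
    exists_selfAdjoint_approximateUnit hB.starCore hB.isClosed_starCore
  have hbb : star b * b ∈ B := hB.mul_mem_left _ hb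
  have hbb_core : star b * b ∈ hB.starCore :=
    ⟨hbb, by rwa [star_mul, star_star]⟩
  have hlim : Tendsto (fun p => b * p) l (𝓝 b) :=
    tendsto_mul_of_tendsto_star_mul_self_mul hp (hunit _ hbb_core).1
  refine hB.1.mem_of_tendsto hlim.star (hcore.mono fun p hpB => ?_)
  rw [star_mul]
  exact hB.mul_mem_right _ hpB.2

theorem isHereditarySubalg (hB : IsClosedTwoSidedIdealAlg B) : IsHereditarySubalg B :=
  ⟨hB.1, hB.2.1, hB.2.2.1, hB.2.2.2.1, fun a _ _ hb => hB.mul_mem_left a hb,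
    fun _ hb => hB.star_mem hb, fun a _ c _ hb => hB.mul_mem_left (a * c) hb⟩

end IsClosedTwoSidedIdealAlg

namespace BasicTriple

variable (t : BasicTriple E A)

theorem act_sub_left (x y : E) (a : A) : t.act (x - y) a = t.act x a - t.act y a :=
  map_sub (AddMonoidHom.mk' (t.act · a) fun x y => t.act_add_left x y a) x y

theorem act_sub_right (x : E) (a b : A) : t.act x (a - b) = t.act x a - t.act x b :=
  map_sub (AddMonoidHom.mk' (t.act x) (t.act_add_right x)) a b

theorem inner_sub_left (x y z : E) : t.inner (x - y) z = t.inner x z - t.inner y z :=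
  map_sub (AddMonoidHom.mk' (t.inner · z) fun x y => t.inner_add_left x y z) x y

theorem inner_sub_right (x y z : E) : t.inner x (y - z) = t.inner x y - t.inner x z :=
  map_sub (AddMonoidHom.mk' (t.inner x) (t.inner_add_right x)) y z

theorem inner_act_left (x y : E) (a : A) : t.inner (t.act x a) y = star a * t.inner x y := by
  rw [← t.star_inner, ← t.inner_mul, star_mul, t.star_inner]

theorem inner_act_sub_self {p : A} (hsa : IsSelfAdjoint p) (z : E) :
    t.inner (t.act z p - z) (t.act z p - z) =
      p * (t.inner z z * p - t.inner z z) - (t.inner z z * p - t.inner z z) := by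
  rw [inner_sub_right, inner_sub_left, inner_sub_left, inner_act_left, inner_act_left,
    ← t.inner_mul, hsa.star_eq, mul_sub]
  abel

end BasicTriple

namespace CStarBasicTriple

variable (t : CStarBasicTriple E' A')

/-- The module action `(x, a) ↦ x a` as a continuous bilinear map. -/
def actCLM : E' →L[ℂ] A' →L[ℂ] E' :=
  (LinearMap.mk₂ ℂ t.act t.act_add_left t.act_smul_left t.act_add_right
    t.act_smul_right).mkContinuous₂ 1 fun x a => by
      simpa only [LinearMap.mk₂_apply, one_mul] using t.norm_act_le x a

/-- The linear map `y ↦ ⟪x, y⟫`. -/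
def innerRightCLM (x : E') : E' →L[ℂ] A' where
  toFun := t.inner x
  map_add' := t.inner_add_right x
  map_smul' c := t.inner_smul_right c x
  cont := t.continuous_inner.comp (.prodMk_right x)

/-- The conjugate-linear map `x ↦ ⟪x, y⟫`. -/
def innerLeftCLM (y : E') : E' →L⋆[ℂ] A' where
  toFun x := t.inner x y
  map_add' x x' := t.inner_add_left x x' y
  map_smul' c x := t.inner_smul_left c x y
  cont := t.continuous_inner.comp (.prodMk_left y)

theorem norm_act_sub_self_pow_three_le {p : A'} (hsa : IsSelfAdjoint p) (hp : ‖p‖ ≤ 1) (z : E') :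
    ‖t.act z p - z‖ ^ 3 ≤ ‖z‖ * (2 * (2 * ‖t.inner z z * p - t.inner z z‖)) := by
  set d := t.inner z z * p - t.inner z z
  calc ‖t.act z p - z‖ ^ 3 = ‖t.act (t.act z p - z) (p * d - d)‖ := by
        rw [← t.norm_triple_self, t.inner_act_sub_self hsa]
    _ = ‖t.act z (p * (p * d - d) - (p * d - d))‖ := by
        rw [t.act_sub_left, t.act_mul, ← t.act_sub_right]
    _ ≤ ‖z‖ * ‖p * (p * d - d) - (p * d - d)‖ := t.norm_act_le _ _
    _ ≤ ‖z‖ * (2 * (2 * ‖d‖)) := by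
        gcongr
        exact (norm_mul_sub_self_le hp _).trans (by gcongr; exact norm_mul_sub_self_le hp d)

theorem tendsto_act_of_tendsto_inner_self_mul {ι : Type*} {l : Filter ι} {p : ι → A'} {z : E'}
    (hp : ∀ᶠ i in l, IsSelfAdjoint (p i) ∧ ‖p i‖ ≤ 1)
    (h : Tendsto (fun i => t.inner z z * p i) l (𝓝 (t.inner z z))) :
    Tendsto (fun i => t.act z (p i)) l (𝓝 z) :=
  tendsto_of_norm_sub_pow_le three_ne_zero
    (hp.mono fun i hi => t.norm_act_sub_self_pow_three_le hi.1 hi.2 z)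
    (by simpa only [mul_zero] using
      (((tendsto_iff_norm_sub_tendsto_zero.1 h).const_mul 2).const_mul 2).const_mul ‖z‖)

/-- Fullness of a `C*`-basic triple: the span of the inner products is dense in `A`, whereas the
algebraic notion `BasicTriple.Full` asks it to be all of `A`. -/
def IsFull : Prop :=
  Dense ((Submodule.span ℂ {a : A' | ∃ x y : E', t.inner x y = a} : Submodule ℂ A') : Set A')

variable {t}

theorem IsFull.map_mem {W : Type*} [TopologicalSpace W] [AddCommMonoid W] [Module ℂ W]
    (hfull : t.IsFull) (f : A' →L[ℂ] W) {K : Submodule ℂ W} (hK : IsClosed (K : Set W))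
    (h : ∀ x y, f (t.inner x y) ∈ K) (a : A') : f a ∈ K :=
  map_mem_of_mem_closure_span f hK (by rintro _ ⟨x, y, rfl⟩; exact h x y) (hfull a)

end CStarBasicTriple

section Correspondence

variable (t : CStarBasicTriple E' A')

/-- `Fʳ` as a submodule of `A`. -/
def rOfSubmodule (F : Set E') : Submodule ℂ A' :=
  (Submodule.span ℂ {a : A' | ∃ x ∈ F, ∃ y ∈ F, t.inner x y = a}).topologicalClosure

/-- `EB` as a submodule of `E`. -/
def modOfSubmodule (B : Set A') : Submodule ℂ E' :=
  (Submodule.span ℂ {x : E' | ∃ y : E', ∃ b ∈ B, t.act y b = x}).topologicalClosure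

theorem isClosed_rOf (F : Set E') : IsClosed (rOf t F) := isClosed_closure

theorem isClosed_modOf (B : Set A') : IsClosed (modOf t B) := isClosed_closure

theorem rOf_mono {F F' : Set E'} (h : F ⊆ F') : rOf t F ⊆ rOf t F' :=
  closure_mono <| Submodule.span_mono fun _ ⟨x, hx, y, hy, hxy⟩ => ⟨x, h hx, y, h hy, hxy⟩

theorem modOf_mono {B B' : Set A'} (h : B ⊆ B') : modOf t B ⊆ modOf t B' :=
  closure_mono <| Submodule.span_mono fun _ ⟨y, b, hb, hyb⟩ => ⟨y, b, h hb, hyb⟩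

variable {t} {F : Set E'} {B : Set A'}

theorem inner_mem_rOf {x y : E'} (hx : x ∈ F) (hy : y ∈ F) : t.inner x y ∈ rOf t F :=
  subset_closure (Submodule.subset_span ⟨x, hx, y, hy, rfl⟩)

theorem act_mem_modOf (y : E') {b : A'} (hb : b ∈ B) : t.act y b ∈ modOf t B :=
  subset_closure (Submodule.subset_span ⟨y, b, hb, rfl⟩)

theorem map_mem_of_mem_rOf {W : Type*} [TopologicalSpace W] [AddCommMonoid W] [Module ℂ W]
    {σ : ℂ →+* ℂ} (f : A' →SL[σ] W) {K : Submodule ℂ W} (hK : IsClosed (K : Set W))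
    (h : ∀ x ∈ F, ∀ y ∈ F, f (t.inner x y) ∈ K) {a : A'} (ha : a ∈ rOf t F) : f a ∈ K :=
  map_mem_of_mem_closure_span f hK (by rintro _ ⟨x, hx, y, hy, rfl⟩; exact h x hx y hy) ha

theorem map_mem_of_mem_modOf {W : Type*} [TopologicalSpace W] [AddCommMonoid W] [Module ℂ W]
    {σ : ℂ →+* ℂ} (f : E' →SL[σ] W) {K : Submodule ℂ W} (hK : IsClosed (K : Set W))
    (h : ∀ y, ∀ b ∈ B, f (t.act y b) ∈ K) {x : E'} (hx : x ∈ modOf t B) : f x ∈ K :=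
  map_mem_of_mem_closure_span f hK (by rintro _ ⟨y, b, hb, rfl⟩; exact h y b hb) hx

theorem star_mem_rOf [StarModule ℂ A'] {a : A'} (ha : a ∈ rOf t F) : star a ∈ rOf t F := by
  refine map_mem_of_mem_rOf (starL ℂ : A' ≃L⋆[ℂ] A').toContinuousLinearMap
    (K := rOfSubmodule t F) (isClosed_rOf t F) (fun x hx y hy => ?_) ha
  change star (t.inner x y) ∈ rOf t F
  rw [t.star_inner]
  exact inner_mem_rOf hy hx

variable (t B) in
theorem isLeftIdealTring_modOf : IsLeftIdealTring t (modOf t B) := by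
  refine ⟨isClosed_modOf t B, (modOfSubmodule t B).zero_mem,
    fun _ hx _ hy => (modOfSubmodule t B).add_mem hx hy,
    fun c _ hx => (modOfSubmodule t B).smul_mem c hx, fun x y z hz => ?_⟩
  refine map_mem_of_mem_modOf (t.actCLM x ∘L t.innerRightCLM y) (K := modOfSubmodule t B)
    (isClosed_modOf t B) (fun u b hb => ?_) hz
  change t.act x (t.inner y (t.act u b)) ∈ modOf t B
  rw [← t.inner_mul, ← t.act_mul]
  exact act_mem_modOf _ hb

theorem IsClosedTwoSidedIdealAlg.isIdealTring_modOf (hB : IsClosedTwoSidedIdealAlg B) :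
    IsIdealTring t (modOf t B) := by
  refine ⟨isLeftIdealTring_modOf t B, fun x hx y z => ?_⟩
  refine map_mem_of_mem_modOf (t.actCLM.flip (t.inner y z)) (K := modOfSubmodule t B)
    (isClosed_modOf t B) (fun u b hb => ?_) hx
  change t.act (t.act u b) (t.inner y z) ∈ modOf t B
  rw [t.act_mul]
  exact act_mem_modOf u (hB.mul_mem_right _ hb)

namespace IsLeftIdealTring

/-- A left ideal of the `C*`-tring `E` as a bundled submodule. -/
def toSubmodule (hF : IsLeftIdealTring t F) : Submodule ℂ E' where
  carrier := F
  zero_mem' := hF.2.1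
  add_mem' hx hy := hF.2.2.1 _ hx _ hy
  smul_mem' c _ hx := hF.2.2.2.1 c _ hx

theorem act_mem (hF : IsLeftIdealTring t F) (y : E') {b : A'} (hb : b ∈ rOf t F) :
    t.act y b ∈ F :=
  map_mem_of_mem_rOf (t.actCLM y) (K := hF.toSubmodule) hF.1
    (fun u _ v hv => hF.2.2.2.2 y u v hv) hb

theorem modOf_rOf_subset (hF : IsLeftIdealTring t F) : modOf t (rOf t F) ⊆ F := fun _ hx =>
  map_mem_of_mem_modOf (.id ℂ E') (K := hF.toSubmodule) hF.1 (fun y _ hb => hF.act_mem y hb) hx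

theorem inner_mul_mem_rOf (hF : IsLeftIdealTring t F) {x : E'} (hx : x ∈ F) (y : E') {b : A'}
    (hb : b ∈ rOf t F) : t.inner x y * b ∈ rOf t F := by
  rw [t.inner_mul]
  exact inner_mem_rOf hx (hF.act_mem y hb)

variable [IsScalarTower ℂ A' A'] [SMulCommClass ℂ A' A']

theorem mul_mem_rOf (hF : IsLeftIdealTring t F) {a b : A'} (ha : a ∈ rOf t F)
    (hb : b ∈ rOf t F) : a * b ∈ rOf t F :=
  map_mem_of_mem_rOf ((ContinuousLinearMap.mul ℂ A').flip b) (K := rOfSubmodule t F)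
    (isClosed_rOf t F) (fun _ hx y _ => hF.inner_mul_mem_rOf hx y hb) ha

theorem mul_mul_mem_rOf (hF : IsLeftIdealTring t F) {a b : A'} (ha : a ∈ rOf t F) (c : A')
    (hb : b ∈ rOf t F) : a * c * b ∈ rOf t F := by
  rw [mul_assoc]
  refine map_mem_of_mem_rOf ((ContinuousLinearMap.mul ℂ A').flip (c * b)) (K := rOfSubmodule t F)
    (isClosed_rOf t F) (fun x hx y _ => ?_) ha
  change t.inner x y * (c * b) ∈ rOf t F
  rw [← mul_assoc, t.inner_mul]
  exact hF.inner_mul_mem_rOf hx _ hb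

variable [StarModule ℂ A']

theorem isHereditarySubalg_rOf (hF : IsLeftIdealTring t F) : IsHereditarySubalg (rOf t F) :=
  ⟨isClosed_rOf t F, (rOfSubmodule t F).zero_mem,
    fun _ ha _ hb => (rOfSubmodule t F).add_mem ha hb,
    fun c _ ha => (rOfSubmodule t F).smul_mem c ha, fun _ ha _ hb => hF.mul_mem_rOf ha hb,
    fun _ ha => star_mem_rOf ha, fun _ ha c _ hb => hF.mul_mul_mem_rOf ha c hb⟩

variable [CompleteSpace A']

theorem modOf_rOf (hF : IsLeftIdealTring t F) : modOf t (rOf t F) = F := by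
  refine hF.modOf_rOf_subset.antisymm fun z hz => ?_
  have hr := hF.isHereditarySubalg_rOf
  obtain ⟨l, hl, hmem, hp, hunit⟩ :=
    exists_selfAdjoint_approximateUnit hr.toNonUnitalStarSubalgebra hr.1
  have hlim : Tendsto (fun p => t.act z p) l (𝓝 z) :=
    t.tendsto_act_of_tendsto_inner_self_mul hp (hunit _ (inner_mem_rOf hz hz)).1
  exact (isClosed_modOf t _).mem_of_tendsto hlim (hmem.mono fun p hpB => act_mem_modOf z hpB)

theorem subset_iff_rOf_subset_rOf {F' : Set E'} (hF : IsLeftIdealTring t F)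
    (hF' : IsLeftIdealTring t F') : F ⊆ F' ↔ rOf t F ⊆ rOf t F' :=
  ⟨rOf_mono t, fun h => by simpa only [hF.modOf_rOf, hF'.modOf_rOf] using modOf_mono t h⟩

end IsLeftIdealTring

theorem IsIdealTring.act_mem (hF : IsIdealTring t F) (hfull : t.IsFull) {x : E'} (hx : x ∈ F)
    (a : A') : t.act x a ∈ F :=
  hfull.map_mem (t.actCLM x) (K := hF.1.toSubmodule) hF.1.1 (hF.2 x hx) a

section Hereditary

theorem IsHereditarySubalg.inner_mem (hB : IsHereditarySubalg B) {x y : E'}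
    (hx : x ∈ modOf t B) (hy : y ∈ modOf t B) : t.inner x y ∈ B := by
  let K : Submodule ℂ A' := hB.toNonUnitalStarSubalgebra.toSubmodule
  refine map_mem_of_mem_modOf (t.innerLeftCLM y) (K := K) hB.1 (fun u b hb => ?_) hx
  refine map_mem_of_mem_modOf (t.innerRightCLM (t.act u b)) (K := K) hB.1 (fun v c hc => ?_) hy
  change t.inner (t.act u b) (t.act v c) ∈ B
  rw [← t.inner_mul, t.inner_act_left]
  exact hB.star_mul_mul_mem hb _ hc

theorem IsHereditarySubalg.rOf_modOf_subset (hB : IsHereditarySubalg B) :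
    rOf t (modOf t B) ⊆ B := fun _ ha =>
  map_mem_of_mem_rOf (.id ℂ A') (K := hB.toNonUnitalStarSubalgebra.toSubmodule) hB.1
    (fun _ hx _ hy => hB.inner_mem hx hy) ha

variable [IsScalarTower ℂ A' A'] [SMulCommClass ℂ A' A']

theorem star_mul_mul_mem_rOf_modOf (hfull : t.IsFull) {b c : A'} (hb : b ∈ B) (a : A')
    (hc : c ∈ B) : star b * a * c ∈ rOf t (modOf t B) := by
  refine hfull.map_mem ((ContinuousLinearMap.mul ℂ A').flip c ∘L ContinuousLinearMap.mul ℂ A'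
    (star b)) (K := rOfSubmodule t (modOf t B)) (isClosed_rOf t _) (fun x y => ?_) a
  change star b * t.inner x y * c ∈ rOf t (modOf t B)
  rw [← t.inner_act_left, t.inner_mul]
  exact inner_mem_rOf (act_mem_modOf x hb) (act_mem_modOf y hc)

variable [StarModule ℂ A']

theorem IsIdealTring.isClosedTwoSidedIdealAlg_rOf (hF : IsIdealTring t F) (hfull : t.IsFull) :
    IsClosedTwoSidedIdealAlg (rOf t F) := by
  have mul_mem_right {b : A'} (hb : b ∈ rOf t F) (a : A') : b * a ∈ rOf t F := by
    refine map_mem_of_mem_rOf ((ContinuousLinearMap.mul ℂ A').flip a) (K := rOfSubmodule t F)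
      (isClosed_rOf t F) (fun x hx y hy => ?_) hb
    change t.inner x y * a ∈ rOf t F
    rw [t.inner_mul]
    exact inner_mem_rOf hx (hF.act_mem hfull hy a)
  refine ⟨isClosed_rOf t F, (rOfSubmodule t F).zero_mem,
    fun _ ha _ hb => (rOfSubmodule t F).add_mem ha hb,
    fun c _ ha => (rOfSubmodule t F).smul_mem c ha, fun a b hb => ⟨?_, mul_mem_right hb a⟩⟩
  simpa only [star_mul, star_star] using star_mem_rOf (mul_mem_right (star_mem_rOf hb) (star a))

variable [CompleteSpace A']

theorem IsHereditarySubalg.rOf_modOf (hB : IsHereditarySubalg B) (hfull : t.IsFull) :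
    rOf t (modOf t B) = B := by
  refine hB.rOf_modOf_subset.antisymm fun b hb => ?_
  obtain ⟨l, hl, hmem, -, hunit⟩ :=
    exists_selfAdjoint_approximateUnit hB.toNonUnitalStarSubalgebra hB.1
  have hclosed := isClosed_rOf t (modOf t B)
  have mul_mem {q : A'} (hq : q ∈ B) : q * b ∈ rOf t (modOf t B) := by
    refine hclosed.mem_of_tendsto (hunit _ (hB.mul_mem hq hb)).1 (hmem.mono fun p hp => ?_)
    simpa only [star_star] using
      star_mul_mul_mem_rOf_modOf hfull (hB.star_mem hq) b hp
  exact hclosed.mem_of_tendsto (hunit b hb).2 (hmem.mono fun q hq => mul_mem hq)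

end Hereditary

end Correspondence

theorem stmt_19_general {E A : Type*} [NormedAddCommGroup E] [NormedSpace ℂ E]
    [NonUnitalNormedRing A] [NormedSpace ℂ A] [StarRing A]
    [CStarRing A] [CompleteSpace A] [StarModule ℂ A]
    [IsScalarTower ℂ A A] [SMulCommClass ℂ A A]
    (t : CStarBasicTriple E A) (hfull : t.IsFull) :
    (∀ F : Set E, IsLeftIdealTring t F → IsHereditarySubalg (rOf t F)) ∧
    (∀ B : Set A, IsHereditarySubalg B → IsLeftIdealTring t (modOf t B)) ∧
    (∀ F : Set E, IsLeftIdealTring t F → modOf t (rOf t F) = F) ∧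
    (∀ B : Set A, IsHereditarySubalg B → rOf t (modOf t B) = B) ∧
    (∀ F F' : Set E, IsLeftIdealTring t F → IsLeftIdealTring t F' →
      (F ⊆ F' ↔ rOf t F ⊆ rOf t F')) ∧
    (∀ F : Set E, IsIdealTring t F → IsClosedTwoSidedIdealAlg (rOf t F)) ∧
    (∀ B : Set A, IsClosedTwoSidedIdealAlg B →
      IsIdealTring t (modOf t B) ∧ rOf t (modOf t B) = B) :=
  ⟨fun _ hF => hF.isHereditarySubalg_rOf,
    fun B _ => isLeftIdealTring_modOf t B,
    fun _ hF => hF.modOf_rOf,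
    fun _ hB => hB.rOf_modOf hfull,
    fun _ _ hF hF' => hF.subset_iff_rOf_subset_rOf hF',
    fun _ hF => hF.isClosedTwoSidedIdealAlg_rOf hfull,
    fun _ hB => ⟨hB.isIdealTring_modOf, hB.isHereditarySubalg.rOf_modOf hfull⟩⟩

/-- Let `(E, A, ⟪·,·⟫)` be a full `C*`-basic triple.  Then
`F ↦ Fʳ` is an inclusion-preserving bijection from the left ideals of `E` onto
the hereditary `C*`-subalgebras of `A`, with inverse `B ↦ EB`, and it restricts
to an inclusion-preserving bijection from the two-sided ideals of `E` onto the
closed two-sided ideals of `A`. -/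
theorem stmt_19 {E A : Type*} [NormedAddCommGroup E] [NormedSpace ℂ E]
    [CompleteSpace E] [NonUnitalNormedRing A] [NormedSpace ℂ A] [StarRing A]
    [CStarRing A] [CompleteSpace A] [StarModule ℂ A]
    [IsScalarTower ℂ A A] [SMulCommClass ℂ A A]
    (t : CStarBasicTriple E A)
    (hfull : Dense
      ((Submodule.span ℂ {a : A | ∃ x y : E, t.inner x y = a} : Submodule ℂ A) :
        Set A)) :
    -- `F ↦ Fʳ` maps left ideals to hereditary subalgebras
    (∀ F : Set E, IsLeftIdealTring t F → IsHereditarySubalg (rOf t F)) ∧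
    -- `B ↦ EB` maps hereditary subalgebras to left ideals
    (∀ B : Set A, IsHereditarySubalg B → IsLeftIdealTring t (modOf t B)) ∧
    -- the two maps are mutually inverse
    (∀ F : Set E, IsLeftIdealTring t F → modOf t (rOf t F) = F) ∧
    (∀ B : Set A, IsHereditarySubalg B → rOf t (modOf t B) = B) ∧
    -- `F ↦ Fʳ` preserves and reflects inclusions
    (∀ F F' : Set E, IsLeftIdealTring t F → IsLeftIdealTring t F' →
      (F ⊆ F' ↔ rOf t F ⊆ rOf t F')) ∧
    -- the restriction to two-sided ideals is a bijection onto the closed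
    -- two-sided ideals of `A`
    (∀ F : Set E, IsIdealTring t F → IsClosedTwoSidedIdealAlg (rOf t F)) ∧
    (∀ B : Set A, IsClosedTwoSidedIdealAlg B →
      IsIdealTring t (modOf t B) ∧ rOf t (modOf t B) = B) :=
  stmt_19_general t hfull

end Statement19
end
end
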